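/- Let m ≥ 2n ≥ 2 and let U be an m×m Haar distributed unitary matrix with upper-left n×n corner A. Then the distribution of A is absolutely continuous with respect to Lebesgue measure λ_n on the space of n×n complex matrices (identified with ℝ^{2n²}), with density proportional to det(1 - A*A)^{m-2n} on the set of contractions {A : ‖A‖ ≤ 1} and zero elsewhere; i.e., there is a constant C(n,m) > 0 such that the law of A is C(n,m) det(1-A*A)^{m-2n} 1_{‖A‖≤1} dλ_n(A). -/

import Mathlib

open MeasureTheory Filter Topology Matrix
open scoped ENNReal NNReal ComplexOrder

noncomputable section

instance matMS (k : ℕ) : MeasurableSpace (Matrix (Fin k) (Fin k) ℂ) :=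
  MeasurableSpace.pi

/-- The `n × n` upper-left corner of an `m × m` matrix. -/
def truncation (m n : ℕ) (U : Matrix (Fin m) (Fin m) ℂ) : Matrix (Fin n) (Fin n) ℂ :=
  Matrix.of fun i j => if h : (i : ℕ) < m ∧ (j : ℕ) < m then U ⟨i, h.1⟩ ⟨j, h.2⟩ else 0

/-- Lebesgue measure on the space of `n × n` complex matrices (identified
with `ℝ^{2n²}`). -/
def lebesgueMatrix (n : ℕ) : Measure (Matrix (Fin n) (Fin n) ℂ) :=
  Measure.pi fun _ : Fin n => Measure.pi fun _ : Fin n => (volume : Measure ℂ)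


instance (priority := 50) matMS' (k l : ℕ) : MeasurableSpace (Matrix (Fin k) (Fin l) ℂ) :=
  MeasurableSpace.pi

instance matBS (k l : ℕ) : BorelSpace (Matrix (Fin k) (Fin l) ℂ) :=
  inferInstanceAs (BorelSpace (Fin k → Fin l → ℂ))

instance matSC (k l : ℕ) : SecondCountableTopology (Matrix (Fin k) (Fin l) ℂ) :=
  inferInstanceAs (SecondCountableTopology (Fin k → Fin l → ℂ))

/-- Lebesgue measure on rectangular matrices. -/
def leb (k l : ℕ) : Measure (Matrix (Fin k) (Fin l) ℂ) :=
  (volume : Measure (Fin k → Fin l → ℂ))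

lemma leb_eq (n : ℕ) : lebesgueMatrix n = leb n n := rfl

instance lebSF (k l : ℕ) : SigmaFinite (leb k l) :=
  inferInstanceAs (SigmaFinite (volume : Measure (Fin k → Fin l → ℂ)))

section
open scoped MatrixOrder Matrix.Norms.L2Operator
lemma cont_sqrt (n : ℕ) : ContinuousOn (CFC.sqrt : Matrix (Fin n) (Fin n) ℂ → _) {a | 0 ≤ a} := CFC.continuousOn_sqrt
end

instance ugSC (k : ℕ) : SecondCountableTopology (Matrix.unitaryGroup (Fin k) ℂ) :=
  Topology.IsEmbedding.subtypeVal.secondCountableTopology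


/-- Change of variables for a real-linear map. -/
lemma lint_linear {E : Type*} [NormedAddCommGroup E] [NormedSpace ℝ E] [MeasurableSpace E]
    [BorelSpace E] [FiniteDimensional ℝ E] (μ : Measure E) [μ.IsAddHaarMeasure]
    (L : E →ₗ[ℝ] E) (hL : LinearMap.det L ≠ 0) (f : E → ℝ≥0∞) (hf : Measurable f) :
    ENNReal.ofReal |LinearMap.det L| * ∫⁻ x, f (L x) ∂μ = ∫⁻ x, f x ∂μ := by
  have hm : Measurable L := L.continuous_of_finiteDimensional.measurable
  rw [← lintegral_map hf hm, Measure.map_linearMap_addHaar_eq_smul_addHaar μ hL,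
    lintegral_smul_measure, smul_eq_mul, ← mul_assoc, ← ENNReal.ofReal_mul (abs_nonneg _), ← abs_mul,
    mul_inv_cancel₀ hL]
  simp

instance lebHaar (k l : ℕ) : (leb k l).IsAddHaarMeasure :=
  Measure.pi.isAddHaarMeasure fun _ : Fin k => Measure.pi fun _ : Fin l => (volume : Measure ℂ)

instance matFD (k l : ℕ) : FiniteDimensional ℝ (Matrix (Fin k) (Fin l) ℂ) :=
  Module.Finite.trans ℂ _

section
attribute [local instance] Matrix.normedAddCommGroup Matrix.normedSpace

lemma lint_mat (k l : ℕ) (L : Matrix (Fin k) (Fin l) ℂ →ₗ[ℝ] Matrix (Fin k) (Fin l) ℂ)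
    (hL : LinearMap.det L ≠ 0) (f : Matrix (Fin k) (Fin l) ℂ → ℝ≥0∞) (hf : Measurable f) :
    ENNReal.ofReal |LinearMap.det L| * ∫⁻ x, f (L x) ∂(leb k l) = ∫⁻ x, f x ∂(leb k l) :=
  @lint_linear (Matrix (Fin k) (Fin l) ℂ) _ _ _ (matBS k l) _ (leb k l) (lebHaar k l) L hL f hf
end

lemma det_rightMul (k n : ℕ) (T : Matrix (Fin n) (Fin n) ℂ) :
    LinearMap.det (mulRightLinearMap (Fin k) ℂ T) = T.det ^ k := by
  have : mulRightLinearMap (Fin k) ℂ T =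
      (LinearMap.pi fun i : Fin k => (Matrix.toLin' Tᵀ).comp (LinearMap.proj i) :
        (Fin k → Fin n → ℂ) →ₗ[ℂ] (Fin k → Fin n → ℂ)) := by
    apply LinearMap.ext
    intro G
    funext i j
    change (G * T) i j = (Matrix.toLin' Tᵀ) (G i) j
    simp [Matrix.mul_apply, Matrix.mulVec, dotProduct, mul_comm]
  rw [this]
  refine (LinearMap.det_pi (fun _ : Fin k => Matrix.toLin' Tᵀ)).trans ?_
  simp

lemma det_leftMul (n k : ℕ) (T : Matrix (Fin n) (Fin n) ℂ) :
    LinearMap.det (mulLeftLinearMap (Fin k) ℂ T) = T.det ^ k := by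
  have := LinearMap.det_conj (mulRightLinearMap (Fin k) ℂ Tᵀ)
    (Matrix.transposeLinearEquiv (Fin k) (Fin n) ℂ ℂ)
  rw [det_rightMul, Matrix.det_transpose] at this
  rw [← this]
  congr 1
  apply LinearMap.ext
  intro G
  simp [Matrix.transpose_mul]

lemma lint_right (k n : ℕ) (T : Matrix (Fin n) (Fin n) ℂ) (hT : T.det ≠ 0)
    (f : Matrix (Fin k) (Fin n) ℂ → ℝ≥0∞) (hf : Measurable f) :
    ENNReal.ofReal (‖T.det‖ ^ (2 * k)) * ∫⁻ G, f (G * T) ∂(leb k n) = ∫⁻ G, f G ∂(leb k n) := by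
  have h : LinearMap.det ((mulRightLinearMap (Fin k) ℂ T).restrictScalars ℝ)
      = ‖T.det‖ ^ (2 * k) := by
    rw [LinearMap.det_restrictScalars, det_rightMul, Algebra.norm_complex_apply,
      Complex.normSq_eq_norm_sq, norm_pow]
    ring
  have := lint_mat k n
    ((mulRightLinearMap (Fin k) ℂ T).restrictScalars ℝ)
    (by rw [h]; positivity) f hf
  rw [h, abs_of_nonneg (by positivity)] at this
  exact this

lemma lint_left (n k : ℕ) (T : Matrix (Fin n) (Fin n) ℂ) (hT : T.det ≠ 0)
    (f : Matrix (Fin n) (Fin k) ℂ → ℝ≥0∞) (hf : Measurable f) :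
    ENNReal.ofReal (‖T.det‖ ^ (2 * k)) * ∫⁻ G, f (T * G) ∂(leb n k) = ∫⁻ G, f G ∂(leb n k) := by
  have h : LinearMap.det ((mulLeftLinearMap (Fin k) ℂ T).restrictScalars ℝ)
      = ‖T.det‖ ^ (2 * k) := by
    rw [LinearMap.det_restrictScalars, det_leftMul, Algebra.norm_complex_apply,
      Complex.normSq_eq_norm_sq, norm_pow]
    ring
  have := lint_mat n k
    ((mulLeftLinearMap (Fin k) ℂ T).restrictScalars ℝ)
    (by rw [h]; positivity) f hf
  rw [h, abs_of_nonneg (by positivity)] at this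
  exact this


/-- Real coordinates for Hermitian matrices. -/
def phi (n : ℕ) : (Fin n → Fin n → ℝ) →ₗ[ℝ] Matrix (Fin n) (Fin n) ℂ where
  toFun R := Matrix.of fun i j => ⟨R i j + R j i, R i j - R j i⟩
  map_add' R S := by ext i j; apply Complex.ext <;> simp <;> ring
  map_smul' c R := by ext i j; apply Complex.ext <;> simp <;> ring

/-- Left inverse of `phi`. -/
def psi (n : ℕ) : Matrix (Fin n) (Fin n) ℂ →ₗ[ℝ] (Fin n → Fin n → ℝ) where
  toFun H := fun i j => ((H i j).re + (H i j).im) / 2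
  map_add' R S := by ext i j; simp; ring
  map_smul' c R := by ext i j; simp; ring

lemma psi_phi {n : ℕ} (R) : psi n (phi n R) = R := by
  funext i j; simp [psi, phi]

lemma phi_herm {n : ℕ} (R) : (phi n R).IsHermitian := by
  ext i j; apply Complex.ext <;> simp [phi] ; ring

lemma phi_psi {n : ℕ} {H : Matrix (Fin n) (Fin n) ℂ} (hH : H.IsHermitian) :
    phi n (psi n H) = H := by
  ext i j
  have h := congrFun (congrFun hH i) j
  have h1 := congrArg Complex.re h
  have h2 := congrArg Complex.im h
  simp at h1 h2
  apply Complex.ext <;> simp [phi, psi] <;> linarith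

/-- `phi ⊕ i phi` is a real isomorphism onto all matrices. -/
def JJ (n : ℕ) : ((Fin n → Fin n → ℝ) × (Fin n → Fin n → ℝ)) ≃ₗ[ℝ] Matrix (Fin n) (Fin n) ℂ :=
  LinearEquiv.ofBijective
    ((phi n).coprod ((LinearMap.lsmul ℂ (Matrix (Fin n) (Fin n) ℂ) Complex.I).restrictScalars ℝ
      ∘ₗ phi n)) (by
    constructor
    · rw [← LinearMap.ker_eq_bot, LinearMap.ker_eq_bot']
      rintro ⟨R, S⟩ h
      simp at h
      have h' := congrArg conjTranspose h
      rw [conjTranspose_add, conjTranspose_smul, phi_herm R, phi_herm S] at h'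
      simp at h'
      have hR : phi n R = 0 := by
        have : (2:ℂ) • phi n R = 0 := by
          rw [two_smul]
          calc _ = (phi n R + Complex.I • phi n S) + (phi n R + -(Complex.I • phi n S)) := by abel
            _ = 0 := by rw [h, h', add_zero]
        simpa using this
      have hS : phi n S = 0 := by simpa [hR] using h
      have := psi_phi R
      have := psi_phi S
      simp_all
    · intro A
      refine ⟨(psi n ((1/2 : ℂ) • (A + Aᴴ)), psi n ((-Complex.I/2 : ℂ) • (A - Aᴴ))), ?_⟩
      simp only [LinearMap.coprod_apply, LinearMap.comp_apply, LinearMap.restrictScalars_apply,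
        LinearMap.lsmul_apply]
      rw [phi_psi, phi_psi, smul_smul, ← mul_div_assoc, mul_neg, Complex.I_mul_I]
      · module
      · ext i j; apply Complex.ext <;> simp <;> ring
      · ext i j; apply Complex.ext <;> simp <;> ring)

lemma JJ_apply (n : ℕ) (R S) : JJ n (R, S) = phi n R + Complex.I • phi n S := rfl

/-- Congruence by `T` as a real-linear map in Hermitian coordinates. -/
def congrC (n : ℕ) (T : Matrix (Fin n) (Fin n) ℂ) :
    (Fin n → Fin n → ℝ) →ₗ[ℝ] (Fin n → Fin n → ℝ) :=
  psi n ∘ₗ ((mulLeftLinearMap (Fin n) ℂ Tᴴ).restrictScalars ℝ ∘ₗ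
    (mulRightLinearMap (Fin n) ℂ T).restrictScalars ℝ) ∘ₗ phi n

lemma phi_congrC (n : ℕ) (T R) : phi n (congrC n T R) = Tᴴ * phi n R * T := by
  have : congrC n T R = psi n (Tᴴ * phi n R * T) := by
    simp [congrC, Matrix.mul_assoc]
  rw [this, phi_psi]
  exact isHermitian_conjTranspose_mul_mul T (phi_herm R)

lemma det_congrC (n : ℕ) (T : Matrix (Fin n) (Fin n) ℂ) :
    |LinearMap.det (congrC n T)| = ‖T.det‖ ^ (2 * n) := by
  have h1 : (JJ n : _ →ₗ[ℝ] _) ∘ₗ ((congrC n T).prodMap (congrC n T)) ∘ₗ ((JJ n).symm : _ →ₗ[ℝ] _)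
      = ((mulLeftLinearMap (Fin n) ℂ Tᴴ).restrictScalars ℝ ∘ₗ
    (mulRightLinearMap (Fin n) ℂ T).restrictScalars ℝ) := by
    apply LinearMap.ext
    intro A
    obtain ⟨⟨R, S⟩, rfl⟩ := (JJ n).surjective A
    rw [LinearMap.comp_apply, LinearMap.comp_apply, LinearEquiv.coe_coe, LinearEquiv.coe_coe,
      LinearEquiv.symm_apply_apply, LinearMap.prodMap_apply, JJ_apply, JJ_apply]
    simp [phi_congrC, Matrix.mul_assoc, Matrix.mul_add, Matrix.add_mul]
  have h2 := congrArg LinearMap.det h1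
  rw [LinearMap.det_conj, LinearMap.det_prodMap, LinearMap.det_comp,
    LinearMap.det_restrictScalars, LinearMap.det_restrictScalars, det_leftMul, det_rightMul,
    Algebra.norm_complex_apply, Algebra.norm_complex_apply, Complex.normSq_eq_norm_sq,
    Complex.normSq_eq_norm_sq, det_conjTranspose, norm_pow, norm_pow, norm_star] at h2
  rw [← sq_eq_sq₀ (abs_nonneg _) (by positivity), sq_abs, sq, h2]
  ring

/-- Lebesgue measure on Hermitian matrices. -/
def eta (n : ℕ) : Measure (Matrix (Fin n) (Fin n) ℂ) :=
  Measure.map (phi n) (volume : Measure (Fin n → Fin n → ℝ))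

lemma phi_cont (n : ℕ) : Continuous (phi n) := LinearMap.continuous_of_finiteDimensional _

lemma phi_meas (n : ℕ) : Measurable (phi n) := (phi_cont n).measurable

instance etaSF (n : ℕ) : SFinite (eta n) := by unfold eta; infer_instance

lemma eta_congr (n : ℕ) (T : Matrix (Fin n) (Fin n) ℂ) (hT : T.det ≠ 0)
    (f : Matrix (Fin n) (Fin n) ℂ → ℝ≥0∞) (hf : Measurable f) :
    ENNReal.ofReal (‖T.det‖ ^ (2 * n)) * ∫⁻ H, f (Tᴴ * H * T) ∂(eta n) = ∫⁻ H, f H ∂(eta n) := by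
  have hm : Measurable fun H : Matrix (Fin n) (Fin n) ℂ => f (Tᴴ * H * T) :=
    hf.comp (by fun_prop : Continuous fun H : Matrix (Fin n) (Fin n) ℂ => Tᴴ * H * T).measurable
  have : (volume : Measure (Fin n → Fin n → ℝ)).IsAddHaarMeasure :=
    Measure.pi.isAddHaarMeasure fun _ : Fin n => (volume : Measure (Fin n → ℝ))
  rw [eta, lintegral_map hf (phi_meas n), lintegral_map hm (phi_meas n)]
  have h := lint_linear (volume : Measure (Fin n → Fin n → ℝ)) (congrC n T)
    (by rw [← abs_ne_zero, det_congrC]; positivity) (fun R => f (phi n R)) (hf.comp (phi_meas n))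
  rw [← h, det_congrC]
  simp only [phi_congrC]

lemma eta_trans (n : ℕ) (K : Matrix (Fin n) (Fin n) ℂ) (hK : K.IsHermitian)
    (f : Matrix (Fin n) (Fin n) ℂ → ℝ≥0∞) (hf : Measurable f) :
    ∫⁻ H, f (H + K) ∂(eta n) = ∫⁻ H, f H ∂(eta n) := by
  have hm : Measurable fun H : Matrix (Fin n) (Fin n) ℂ => f (H + K) :=
    hf.comp (by fun_prop : Continuous fun H : Matrix (Fin n) (Fin n) ℂ => H + K).measurable
  have : (volume : Measure (Fin n → Fin n → ℝ)).IsAddHaarMeasure :=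
    Measure.pi.isAddHaarMeasure fun _ : Fin n => (volume : Measure (Fin n → ℝ))
  rw [eta, lintegral_map hf (phi_meas n), lintegral_map hm (phi_meas n)]
  rw [← lintegral_add_right_eq_self (fun R => f (phi n R)) (psi n K)]
  simp only [map_add, phi_psi hK]

lemma eta_herm (n : ℕ) : ∀ᵐ H ∂(eta n), H.IsHermitian := by
  unfold eta
  rw [ae_map_iff (phi_meas n).aemeasurable]
  · exact Filter.Eventually.of_forall fun R => phi_herm R
  · exact (isClosed_eq (by fun_prop) (by fun_prop) :
      IsClosed {H : Matrix (Fin n) (Fin n) ℂ | Hᴴ = H}).measurableSet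


lemma det_null (n d : ℕ) : ∀ᵐ G ∂(leb (n + d) n), (G.submatrix (Fin.castAdd d) id).det ≠ 0 := by
  let N : Set (Matrix (Fin (n + d)) (Fin n) ℂ) := {G | (G.submatrix (Fin.castAdd d) id).det = 0}
  have hN : MeasurableSet N := (isClosed_eq (by fun_prop) (by fun_prop)).measurableSet
  let E : Matrix (Fin (n + d)) (Fin n) ℂ := Matrix.of fun i j => if (i : ℕ) = j then 1 else 0
  have hE : E.submatrix (Fin.castAdd d) id = 1 := by
    ext i j
    simp [E, Matrix.one_apply, Fin.ext_iff]
  let F : ℝ → Matrix (Fin (n + d)) (Fin n) ℂ → ℝ≥0∞ := fun t G => N.indicator 1 (G + (t : ℂ) • E)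
  have hF : Measurable (Function.uncurry F) := by
    refine (measurable_one.indicator hN).comp (?_ : Measurable fun p : ℝ × _ => p.2 + (p.1 : ℂ) • E)
    exact (by fun_prop : Continuous fun p : ℝ × Matrix (Fin (n + d)) (Fin n) ℂ =>
      p.2 + (p.1 : ℂ) • E).measurable
  have h1 : ∫⁻ t in Set.Icc (0:ℝ) 1, ∫⁻ G, F t G ∂(leb (n + d) n) = leb (n + d) n N := by
    have : ∀ t, ∫⁻ G, F t G ∂(leb (n + d) n) = leb (n + d) n N := by
      intro t
      simp only [F]
      rw [lintegral_add_right_eq_self (μ := leb (n + d) n) (N.indicator 1), lintegral_indicator_one hN]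
    simp [this]
  have h2 : ∫⁻ t in Set.Icc (0:ℝ) 1, ∫⁻ G, F t G ∂(leb (n + d) n) = 0 := by
    rw [lintegral_lintegral_swap hF.aemeasurable]
    refine (lintegral_congr fun G => ?_).trans lintegral_zero
    have hfin : {t : ℝ | G + (t : ℂ) • E ∈ N}.Finite := by
      have : {t : ℝ | G + (t : ℂ) • E ∈ N} ⊆
          (fun t : ℝ => (t : ℂ)) ⁻¹' {z | (-(G.submatrix (Fin.castAdd d) id)).charpoly.IsRoot z} := by
        intro t ht
        simp only [N, Set.mem_ofPred_eq] at ht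
        simp only [Set.mem_preimage, Set.mem_ofPred_eq, Polynomial.IsRoot, Matrix.eval_charpoly]
        rw [← ht]
        congr 1
        rw [Matrix.submatrix_add, Matrix.submatrix_smul]
        simp only [Pi.add_apply, Pi.smul_apply, hE]
        ext i j
        simp [Matrix.scalar_apply, Matrix.diagonal_apply, Matrix.one_apply]
        ring
      refine Set.Finite.subset (Set.Finite.preimage ?_ ?_) this
      · exact (Complex.ofReal_injective).injOn
      · exact Polynomial.finite_setOfPred_isRoot (Matrix.charpoly_monic _).ne_zero
    have : ∀ᵐ t ∂(volume.restrict (Set.Icc (0:ℝ) 1)), F t G = 0 := by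
      refine ae_restrict_of_ae ?_
      have h0 := hfin.measure_zero volume
      rw [ae_iff]
      refine measure_mono_null ?_ h0
      intro t ht
      by_contra hc
      have hc' : G + (t : ℂ) • E ∉ N := hc
      exact ht (Set.indicator_of_notMem hc' _)
    rw [lintegral_congr_ae this]; simp
  rw [ae_iff]
  simp only [not_not]
  exact h1.symm.trans h2

lemma det_null' (n : ℕ) : ∀ᵐ T ∂(leb n n), T.det ≠ 0 := det_null n 0

lemma gram_pd {k n : ℕ} (G : Matrix (Fin k) (Fin n) ℂ) (e : Fin n → Fin k)
    (h : (G.submatrix e id).det ≠ 0) : (Gᴴ * G).PosDef := by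
  apply Matrix.PosDef.conjTranspose_mul_self
  intro x y hxy
  have : (G.submatrix e id) *ᵥ x = (G.submatrix e id) *ᵥ y := by
    funext i
    exact congrFun hxy (e i)
  exact Matrix.mulVec_injective_of_isUnit ((Matrix.isUnit_iff_isUnit_det _).2 h.isUnit) this

lemma gram_pd_ae (n d : ℕ) : ∀ᵐ G ∂(leb (n + d) n), (Gᴴ * G).PosDef := by
  filter_upwards [det_null n d] with G hG using gram_pd G _ hG

section
open scoped MatrixOrder Matrix.Norms.L2Operator
lemma psd_closed (n : ℕ) : IsClosed {H : Matrix (Fin n) (Fin n) ℂ | H.PosSemidef} := by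
  have := CStarAlgebra.isClosed_nonneg (A := Matrix (Fin n) (Fin n) ℂ)
  simpa only [Matrix.nonneg_iff_posSemidef] using this
end

lemma psd_meas (n : ℕ) : MeasurableSet {H : Matrix (Fin n) (Fin n) ℂ | H.PosSemidef} :=
  (psd_closed n).measurableSet

lemma pd_meas (n : ℕ) : MeasurableSet {H : Matrix (Fin n) (Fin n) ℂ | H.PosDef} := by
  have : {H : Matrix (Fin n) (Fin n) ℂ | H.PosDef} = {H | H.PosSemidef} ∩ {H | H.det = 0}ᶜ := by
    ext H
    constructor
    · intro h
      exact ⟨h.posSemidef, h.posSemidef.posDef_iff_det_ne_zero.1 h⟩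
    · rintro ⟨h1, h2⟩
      exact (Matrix.PosSemidef.posDef_iff_det_ne_zero h1).2 h2
  rw [this]
  exact (psd_meas n).inter (isClosed_eq (by fun_prop) (by fun_prop)).measurableSet.compl

lemma pd_det {n : ℕ} {H : Matrix (Fin n) (Fin n) ℂ} (h : H.PosDef) : H.det ≠ 0 :=
  h.posSemidef.posDef_iff_det_ne_zero.1 h

section
open scoped MatrixOrder
/-- The positive square root. -/
def rt {n : ℕ} (H : Matrix (Fin n) (Fin n) ℂ) : Matrix (Fin n) (Fin n) ℂ := CFC.sqrt H

lemma rt_mul {n : ℕ} {H : Matrix (Fin n) (Fin n) ℂ} (h : H.PosDef) : rt H * rt H = H :=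
  CFC.sqrt_mul_sqrt_self H (Matrix.nonneg_iff_posSemidef.2 h.posSemidef)

lemma rt_herm {n : ℕ} (H : Matrix (Fin n) (Fin n) ℂ) : (rt H)ᴴ = rt H :=
  (Matrix.nonneg_iff_posSemidef.1 (CFC.sqrt_nonneg H)).isHermitian

lemma rt_det {n : ℕ} {H : Matrix (Fin n) (Fin n) ℂ} (h : H.PosDef) : (rt H).det ≠ 0 := by
  intro h0
  have := congrArg Matrix.det (rt_mul h)
  rw [Matrix.det_mul, h0, zero_mul] at this
  exact pd_det h this.symm

lemma rt_meas (n : ℕ) : Measurable (rt : Matrix (Fin n) (Fin n) ℂ → _) := by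
  have h1 := cont_sqrt n
  have hs : MeasurableSet {a : Matrix (Fin n) (Fin n) ℂ | 0 ≤ a} := by
    simpa only [Matrix.nonneg_iff_posSemidef] using psd_meas n
  refine measurable_of_restrict_of_restrict_compl hs ?_ ?_
  · exact h1.domRestrict.measurable
  · have : ({a : Matrix (Fin n) (Fin n) ℂ | 0 ≤ a}ᶜ).domRestrict rt = fun _ => 0 := by
      funext a
      exact CFC.sqrt_of_not_nonneg a.2
    rw [this]
    exact measurable_const
end

lemma inv_meas (n : ℕ) : Measurable (fun H : Matrix (Fin n) (Fin n) ℂ => H⁻¹) := by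
  have : (fun H : Matrix (Fin n) (Fin n) ℂ => H⁻¹) = fun H => (H.det)⁻¹ • H.adjugate := by
    funext H
    rw [Matrix.inv_def, Ring.inverse_eq_inv']
  rw [this]
  refine measurable_pi_iff.2 fun i => measurable_pi_iff.2 fun j => ?_
  have h1 : Measurable fun H : Matrix (Fin n) (Fin n) ℂ => (H.det)⁻¹ :=
    (by fun_prop : Continuous fun H : Matrix (Fin n) (Fin n) ℂ => H.det).measurable.inv
  have h2 : Measurable fun H : Matrix (Fin n) (Fin n) ℂ => H.adjugate i j :=
    ((by fun_prop : Continuous fun H : Matrix (Fin n) (Fin n) ℂ => H.adjugate).matrix_elem i j).measurable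
  exact h1.mul h2


/-- Indicator of `tr H ≤ 1`. -/
def k0 {n : ℕ} (H : Matrix (Fin n) (Fin n) ℂ) : ℝ≥0∞ :=
  Set.indicator {H : Matrix (Fin n) (Fin n) ℂ | H.trace.re ≤ 1} 1 H

lemma k0_set (n : ℕ) : MeasurableSet {H : Matrix (Fin n) (Fin n) ℂ | H.trace.re ≤ 1} :=
  (isClosed_le (by fun_prop) (by fun_prop)).measurableSet

lemma k0_meas (n : ℕ) : Measurable (k0 : Matrix (Fin n) (Fin n) ℂ → ℝ≥0∞) :=
  measurable_one.indicator (k0_set n)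

/-- Power of the absolute value of the determinant. -/
def dp {n : ℕ} (a : ℕ) (H : Matrix (Fin n) (Fin n) ℂ) : ℝ≥0∞ := ENNReal.ofReal (‖H.det‖ ^ a)

lemma dp_meas (n a : ℕ) : Measurable (dp a : Matrix (Fin n) (Fin n) ℂ → ℝ≥0∞) :=
  (by fun_prop : Continuous fun H : Matrix (Fin n) (Fin n) ℂ => ‖H.det‖ ^ a).measurable.ennreal_ofReal

lemma dp_mul {n : ℕ} (a : ℕ) (H K : Matrix (Fin n) (Fin n) ℂ) : dp a (H * K) = dp a H * dp a K := by
  rw [dp, dp, dp, Matrix.det_mul, norm_mul, mul_pow, ENNReal.ofReal_mul (by positivity)]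

lemma dp_star {n : ℕ} (a : ℕ) (H : Matrix (Fin n) (Fin n) ℂ) : dp a Hᴴ = dp a H := by
  rw [dp, dp, Matrix.det_conjTranspose, norm_star]

lemma dp_add {n : ℕ} (a b : ℕ) (H : Matrix (Fin n) (Fin n) ℂ) : dp (a + b) H = dp a H * dp b H := by
  rw [dp, dp, dp, pow_add, ENNReal.ofReal_mul (by positivity)]

lemma dp_ne {n : ℕ} (a : ℕ) {H : Matrix (Fin n) (Fin n) ℂ} (h : H.det ≠ 0) : dp a H ≠ 0 := by
  rw [dp, ne_eq, ENNReal.ofReal_eq_zero, not_le]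
  positivity

lemma dp_top {n : ℕ} (a : ℕ) (H : Matrix (Fin n) (Fin n) ℂ) : dp a H ≠ ⊤ := ENNReal.ofReal_ne_top

lemma dp_one {n : ℕ} (a : ℕ) : dp a (1 : Matrix (Fin n) (Fin n) ℂ) = 1 := by simp [dp]

lemma dp_inv {n : ℕ} (a : ℕ) {H : Matrix (Fin n) (Fin n) ℂ} (h : H.det ≠ 0) :
    dp a H⁻¹ * dp a H = 1 := by
  rw [← dp_mul, Matrix.nonsing_inv_mul _ h.isUnit, dp_one]

lemma conj_meas (n : ℕ) : Measurable
    fun p : Matrix (Fin n) (Fin n) ℂ × Matrix (Fin n) (Fin n) ℂ => p.1ᴴ * p.2 * p.1 :=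
  (by fun_prop : Continuous fun p : Matrix (Fin n) (Fin n) ℂ × Matrix (Fin n) (Fin n) ℂ =>
    p.1ᴴ * p.2 * p.1).measurable

lemma sq_meas (n : ℕ) : Measurable fun p : Matrix (Fin n) (Fin n) ℂ => pᴴ * p :=
  (by fun_prop : Continuous fun p : Matrix (Fin n) (Fin n) ℂ => pᴴ * p).measurable

lemma inv_conj_meas (n : ℕ) : Measurable
    fun p : Matrix (Fin n) (Fin n) ℂ × Matrix (Fin n) (Fin n) ℂ => p.1ᴴ * p.2⁻¹ * p.1 := by
  have h : Measurable fun p : Matrix (Fin n) (Fin n) ℂ × Matrix (Fin n) (Fin n) ℂ =>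
      ((p.1, p.2⁻¹) : Matrix (Fin n) (Fin n) ℂ × Matrix (Fin n) (Fin n) ℂ) :=
    measurable_fst.prodMk (Measurable.comp (g := fun H : Matrix (Fin n) (Fin n) ℂ => H⁻¹)
      (inv_meas n) measurable_snd)
  have h2 := (conj_meas n).comp h
  simp only [Function.comp_def] at h2
  exact h2

lemma inv_conj_meas' (n : ℕ) : Measurable
    fun p : Matrix (Fin n) (Fin n) ℂ × Matrix (Fin n) (Fin n) ℂ => p.2ᴴ * p.1⁻¹ * p.2 := by
  have h2 := (inv_conj_meas n).comp measurable_swap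
  simp only [Function.comp_def, Prod.fst_swap, Prod.snd_swap] at h2
  exact h2

lemma inv_conj_meas_r (n : ℕ) (T : Matrix (Fin n) (Fin n) ℂ) : Measurable
    fun H : Matrix (Fin n) (Fin n) ℂ => Tᴴ * H⁻¹ * T := by
  have h2 := (inv_conj_meas n).comp (measurable_prodMk_left (x := T))
  simp only [Function.comp_def] at h2
  exact h2

lemma mc {α β γ : Type*} [MeasurableSpace α] [MeasurableSpace β] [MeasurableSpace γ]
    {f : β → γ} {g : α → β} (hf : Measurable f) (hg : Measurable g) :
    Measurable fun x => f (g x) := hf.comp hg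

lemma gen_hA (n d : ℕ) {f : Matrix (Fin n) (Fin n) ℂ → ℝ≥0∞} (hf : Measurable f) :
    Measurable fun p : Matrix (Fin n) (Fin n) ℂ × Matrix (Fin n) (Fin n) ℂ =>
      k0 (p.1ᴴ * p.1) * (dp (2 * (n + d)) p.1 * f (p.1ᴴ * p.2 * p.1)) := by
  have h1 := mc (f := k0) (k0_meas n) (mc (sq_meas n) (measurable_fst (β := Matrix (Fin n) (Fin n) ℂ)))
  have h2 := mc (f := dp (2 * (n + d))) (dp_meas n (2 * (n + d))) (measurable_fst (β := Matrix (Fin n) (Fin n) ℂ))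
  have h3 := mc hf (conj_meas n)
  exact h1.mul (h2.mul h3)

lemma dpinv_meas (n d : ℕ) : Measurable fun p : Matrix (Fin n) (Fin n) ℂ => dp d p⁻¹ := by
  have h2 := mc (f := dp d) (dp_meas n d) (inv_meas n)
  exact h2

lemma k0inv_meas (n : ℕ) : Measurable fun p : Matrix (Fin n) (Fin n) ℂ => k0 p⁻¹ := by
  have h2 := mc (f := k0) (k0_meas n) (inv_meas n)
  exact h2

lemma gen_hB (n d : ℕ) {f : Matrix (Fin n) (Fin n) ℂ → ℝ≥0∞} (hf : Measurable f) :
    Measurable fun p : Matrix (Fin n) (Fin n) ℂ × Matrix (Fin n) (Fin n) ℂ =>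
      k0 (p.2ᴴ * p.1⁻¹ * p.2) * (dp (2 * n + d) p.1⁻¹ * (dp (2 * (n + d)) p.2 * f (p.2ᴴ * p.2))) := by
  have h1 := mc (f := k0) (k0_meas n) (inv_conj_meas' n)
  have h2 := mc (dpinv_meas n (2 * n + d)) (measurable_fst (β := Matrix (Fin n) (Fin n) ℂ))
  have h3 := mc (f := dp (2 * (n + d))) (dp_meas n (2 * (n + d))) (measurable_snd (α := Matrix (Fin n) (Fin n) ℂ))
  have h4 := mc hf (mc (sq_meas n) (measurable_snd (α := Matrix (Fin n) (Fin n) ℂ)))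
  exact h1.mul (h2.mul (h3.mul h4))

lemma conj_meas_r (n : ℕ) (T : Matrix (Fin n) (Fin n) ℂ) : Measurable
    fun H : Matrix (Fin n) (Fin n) ℂ => Tᴴ * H * T :=
  (by fun_prop : Continuous fun H : Matrix (Fin n) (Fin n) ℂ => Tᴴ * H * T).measurable

lemma conj_meas_l (n : ℕ) (H : Matrix (Fin n) (Fin n) ℂ) : Measurable
    fun T : Matrix (Fin n) (Fin n) ℂ => Tᴴ * H * T :=
  (by fun_prop : Continuous fun T : Matrix (Fin n) (Fin n) ℂ => Tᴴ * H * T).measurable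

lemma left_meas (n : ℕ) (H : Matrix (Fin n) (Fin n) ℂ) : Measurable
    fun T : Matrix (Fin n) (Fin n) ℂ => H * T :=
  (by fun_prop : Continuous fun T : Matrix (Fin n) (Fin n) ℂ => H * T).measurable

lemma gen_hm (n d : ℕ) {f : Matrix (Fin n) (Fin n) ℂ → ℝ≥0∞} (hf : Measurable f)
    (H : Matrix (Fin n) (Fin n) ℂ) :
    Measurable fun T : Matrix (Fin n) (Fin n) ℂ =>
      k0 (Tᴴ * T) * (dp (2 * (n + d)) T * f (Tᴴ * H * T)) := by
  have h1 := mc (f := k0) (k0_meas n) (sq_meas n)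
  have h3 := mc hf (conj_meas_l n H)
  exact h1.mul ((dp_meas n _).mul h3)

lemma gen_hm2 (n d : ℕ) {f : Matrix (Fin n) (Fin n) ℂ → ℝ≥0∞} (hf : Measurable f)
    (H Q : Matrix (Fin n) (Fin n) ℂ) :
    Measurable fun T : Matrix (Fin n) (Fin n) ℂ =>
      k0 ((Q * T)ᴴ * (Q * T)) * (dp (2 * (n + d)) (Q * T) * f ((Q * T)ᴴ * H * (Q * T))) := by
  have h1 := mc (gen_hm n d hf H) (left_meas n Q)
  exact h1

lemma gen_hm3 (n d : ℕ) (T : Matrix (Fin n) (Fin n) ℂ) :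
    Measurable fun H : Matrix (Fin n) (Fin n) ℂ =>
            k0 (Tᴴ * H⁻¹ * T) * dp (2 * n + d) H⁻¹ := by
  have h1 := mc (f := k0) (k0_meas n) (inv_conj_meas_r n T)
  exact h1.mul (dpinv_meas n _)

lemma gen_hmk (n d : ℕ) :
    Measurable fun H : Matrix (Fin n) (Fin n) ℂ =>
            k0 H⁻¹ * dp (2 * n + d) H⁻¹ :=
  (k0inv_meas n).mul (dpinv_meas n _)


/-- Uniqueness of relatively invariant measures on the positive definite cone. -/
lemma gen (n d : ℕ) (μ : Measure (Matrix (Fin n) (Fin n) ℂ)) [SFinite μ]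
    (hPD : ∀ᵐ H ∂μ, H.PosDef)
    (hμ : ∀ T : Matrix (Fin n) (Fin n) ℂ, T.det ≠ 0 → ∀ f : Matrix (Fin n) (Fin n) ℂ → ℝ≥0∞,
      Measurable f → dp (2 * (n + d)) T * ∫⁻ H, f (Tᴴ * H * T) ∂μ = ∫⁻ H, f H ∂μ) :
    ∃ κ : ℝ≥0∞, ∀ f : Matrix (Fin n) (Fin n) ℂ → ℝ≥0∞, Measurable f →
      (∫⁻ T, k0 (Tᴴ * T) ∂(leb n n)) * ∫⁻ H, f H ∂μ =
        κ * ∫⁻ T, f (Tᴴ * T) * dp (2 * d) T ∂(leb n n) := by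
  refine ⟨∫⁻ H : Matrix (Fin n) (Fin n) ℂ, k0 H⁻¹ * dp (2 * n + d) H⁻¹ ∂μ, fun f hf => ?_⟩
  have hk1 : Measurable fun T : Matrix (Fin n) (Fin n) ℂ => k0 (Tᴴ * T) :=
    mc (k0_meas n) (sq_meas n)
  have hA : Measurable fun p : Matrix (Fin n) (Fin n) ℂ × Matrix (Fin n) (Fin n) ℂ =>
      k0 (p.1ᴴ * p.1) * (dp (2 * (n + d)) p.1 * f (p.1ᴴ * p.2 * p.1)) := gen_hA n d hf
  have hB := gen_hB n d hf
  calc _ = ∫⁻ T, k0 (Tᴴ * T) * ∫⁻ H, f H ∂μ ∂(leb n n) := (lintegral_mul_const _ hk1).symm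
    _ = ∫⁻ T, ∫⁻ H, k0 (Tᴴ * T) * (dp (2 * (n + d)) T * f (Tᴴ * H * T)) ∂μ ∂(leb n n) := by
        refine lintegral_congr_ae ?_
        filter_upwards [det_null' n] with T hT
        rw [← hμ T hT f hf]
        have h1 : Measurable fun H => f (Tᴴ * H * T) :=
          mc hf (conj_meas_r n T)
        rw [lintegral_const_mul _ (h1.const_mul _), lintegral_const_mul _ h1]
    _ = ∫⁻ H, ∫⁻ T, k0 (Tᴴ * T) * (dp (2 * (n + d)) T * f (Tᴴ * H * T)) ∂(leb n n) ∂μ :=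
        lintegral_lintegral_swap hA.aemeasurable
    _ = ∫⁻ H, ∫⁻ T, k0 (Tᴴ * H⁻¹ * T) * (dp (2 * n + d) H⁻¹ * (dp (2 * (n + d)) T * f (Tᴴ * T)))
          ∂(leb n n) ∂μ := by
        refine lintegral_congr_ae ?_
        filter_upwards [hPD] with H hH
        have hQ := rt_det hH
        have hQi : ((rt H)⁻¹).det ≠ 0 := by
          rw [Matrix.det_nonsing_inv, Ring.inverse_eq_inv']
          exact inv_ne_zero hQ
        have hQQ : (rt H)⁻¹ * (rt H)⁻¹ = H⁻¹ := by
          rw [← Matrix.mul_inv_rev, rt_mul hH]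
        have hQs : ((rt H)⁻¹)ᴴ = (rt H)⁻¹ := by
          rw [Matrix.conjTranspose_nonsing_inv, rt_herm]
        have hm : Measurable fun T : Matrix (Fin n) (Fin n) ℂ =>
            k0 (Tᴴ * T) * (dp (2 * (n + d)) T * f (Tᴴ * H * T)) :=
          gen_hm n d hf H
        have hm2 : Measurable fun T : Matrix (Fin n) (Fin n) ℂ =>
            k0 (((rt H)⁻¹ * T)ᴴ * ((rt H)⁻¹ * T)) * (dp (2 * (n + d)) ((rt H)⁻¹ * T) *
              f (((rt H)⁻¹ * T)ᴴ * H * ((rt H)⁻¹ * T))) :=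
          gen_hm2 n d hf H (rt H)⁻¹
        rw [← lint_left n n ((rt H)⁻¹) hQi _ hm]
        rw [← lintegral_const_mul _ hm2]
        refine lintegral_congr fun T => ?_
        have e1 : ((rt H)⁻¹ * T)ᴴ * ((rt H)⁻¹ * T) = Tᴴ * H⁻¹ * T := by
          rw [Matrix.conjTranspose_mul, hQs, ← hQQ]
          simp only [Matrix.mul_assoc]
        have e2 : ((rt H)⁻¹ * T)ᴴ * H * ((rt H)⁻¹ * T) = Tᴴ * T := by
          have : (rt H)⁻¹ * (H * (rt H)⁻¹) = 1 := by
            nth_rewrite 2 [← rt_mul hH]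
            rw [Matrix.mul_assoc, Matrix.mul_nonsing_inv _ hQ.isUnit, Matrix.mul_one,
              Matrix.nonsing_inv_mul _ hQ.isUnit]
          rw [Matrix.conjTranspose_mul, hQs]
          calc _ = Tᴴ * ((rt H)⁻¹ * (H * (rt H)⁻¹)) * T := by simp only [Matrix.mul_assoc]
            _ = _ := by rw [this, Matrix.mul_one]
        have e3 : ENNReal.ofReal (‖((rt H)⁻¹).det‖ ^ (2 * n)) * dp (2 * (n + d)) ((rt H)⁻¹)
            = dp (2 * n + d) H⁻¹ := by
          rw [← hQQ, dp_mul, ← dp_add]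
          change dp (2 * n) _ * _ = _
          rw [← dp_add]
          congr 1
          ring
        rw [e1, e2, dp_mul, ← e3]
        ring
    _ = ∫⁻ T, ∫⁻ H, k0 (Tᴴ * H⁻¹ * T) * (dp (2 * n + d) H⁻¹ * (dp (2 * (n + d)) T * f (Tᴴ * T)))
          ∂μ ∂(leb n n) := lintegral_lintegral_swap hB.aemeasurable
    _ = ∫⁻ T, (∫⁻ H, k0 H⁻¹ * dp (2 * n + d) H⁻¹ ∂μ) * (f (Tᴴ * T) * dp (2 * d) T) ∂(leb n n) := by
        refine lintegral_congr_ae ?_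
        filter_upwards [det_null' n] with T hT
        have hTs : Tᴴ.det ≠ 0 := by
          rw [Matrix.det_conjTranspose]; simpa using hT
        have hm : Measurable fun H : Matrix (Fin n) (Fin n) ℂ =>
            k0 (Tᴴ * H⁻¹ * T) * dp (2 * n + d) H⁻¹ :=
          gen_hm3 n d T
        have hmk : Measurable fun H : Matrix (Fin n) (Fin n) ℂ =>
            k0 H⁻¹ * dp (2 * n + d) H⁻¹ :=
          gen_hmk n d
        have h1 : ∫⁻ H, k0 (Tᴴ * H⁻¹ * T) * (dp (2 * n + d) H⁻¹ *
            (dp (2 * (n + d)) T * f (Tᴴ * T))) ∂μ =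
            (∫⁻ H, k0 (Tᴴ * H⁻¹ * T) * dp (2 * n + d) H⁻¹ ∂μ) *
              (dp (2 * (n + d)) T * f (Tᴴ * T)) := by
          rw [← lintegral_mul_const _ hm]
          simp only [mul_assoc]
        rw [h1, ← hμ Tᴴ hTs _ hm, Matrix.conjTranspose_conjTranspose]
        have h2 : ∀ H : Matrix (Fin n) (Fin n) ℂ,
            k0 (Tᴴ * (T * H * Tᴴ)⁻¹ * T) * dp (2 * n + d) (T * H * Tᴴ)⁻¹ =
            (k0 H⁻¹ * dp (2 * n + d) H⁻¹) * dp (2 * (2 * n + d)) T⁻¹ := by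
          intro H
          have e1 : Tᴴ * (T * H * Tᴴ)⁻¹ * T = H⁻¹ := by
            rw [Matrix.mul_inv_rev, Matrix.mul_inv_rev]
            calc _ = (Tᴴ * (Tᴴ)⁻¹) * H⁻¹ * (T⁻¹ * T) := by simp only [Matrix.mul_assoc]
              _ = _ := by
                rw [Matrix.mul_nonsing_inv _ hTs.isUnit, Matrix.nonsing_inv_mul _ hT.isUnit,
                  Matrix.one_mul, Matrix.mul_one]
          have e0 : dp (2 * (2 * n + d)) T⁻¹ = dp (2 * n + d) T⁻¹ * dp (2 * n + d) T⁻¹ := by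
            rw [← dp_add]; congr 1; ring
          rw [e1, Matrix.mul_inv_rev, Matrix.mul_inv_rev, dp_mul, dp_mul,
            ← Matrix.conjTranspose_nonsing_inv, dp_star, e0]
          ring
        simp only [h2]
        rw [lintegral_mul_const _ hmk, dp_star]
        have e5 : dp (2 * (n + d)) T * dp (2 * (2 * n + d)) T⁻¹ * dp (2 * (n + d)) T
            = dp (2 * d) T := by
          have : dp (2 * (n + d)) T * dp (2 * (n + d)) T = dp (2 * (2 * n + d)) T * dp (2 * d) T := by
            rw [← dp_add, ← dp_add]; congr 1; ring
          calc _ = dp (2 * (2 * n + d)) T⁻¹ * (dp (2 * (n + d)) T * dp (2 * (n + d)) T) := by ring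
            _ = dp (2 * (2 * n + d)) T⁻¹ * dp (2 * (2 * n + d)) T * dp (2 * d) T := by
              rw [this, mul_assoc]
            _ = _ := by rw [dp_inv _ hT, one_mul]
        rw [← e5]
        ring
    _ = _ := lintegral_const_mul _ ((mc hf (sq_meas n)).mul (dp_meas n _))


/-- Top block. -/
def top {n k l : ℕ} (G : Matrix (Fin (n + k)) (Fin l) ℂ) : Matrix (Fin n) (Fin l) ℂ :=
  G.submatrix (Fin.castAdd k) id

/-- Bottom block. -/
def bot {n k l : ℕ} (G : Matrix (Fin (n + k)) (Fin l) ℂ) : Matrix (Fin k) (Fin l) ℂ :=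
  G.submatrix (Fin.natAdd n) id

lemma gram_split {n k l : ℕ} (G : Matrix (Fin (n + k)) (Fin l) ℂ) :
    Gᴴ * G = (top G)ᴴ * top G + (bot G)ᴴ * bot G := by
  ext i j
  simp [Matrix.mul_apply, Fin.sum_univ_add, top, bot]

lemma split_mp (n k l : ℕ) : MeasurePreserving
    (fun G : Matrix (Fin (n + k)) (Fin l) ℂ => (top (n := n) (k := k) G, bot (n := n) (k := k) G))
    (leb (n + k) l) ((leb n l).prod (leb k l)) := by
  have h1 := (measurePreserving_piCongrLeft (α := fun _ : Fin (n + k) => Fin l → ℂ)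
    (fun _ => volume) finSumFinEquiv).symm
  have h2 := measurePreserving_sumPiEquivProdPi (X := fun _ : Fin n ⊕ Fin k => Fin l → ℂ)
    (fun _ => volume)
  exact h2.comp h1

lemma lint_split (n k l : ℕ) (F : Matrix (Fin n) (Fin l) ℂ × Matrix (Fin k) (Fin l) ℂ → ℝ≥0∞)
    (hF : Measurable F) :
    ∫⁻ G, F (top (n := n) (k := k) G, bot G) ∂(leb (n + k) l) =
      ∫⁻ G1, ∫⁻ G2, F (G1, G2) ∂(leb k l) ∂(leb n l) := by
  rw [(split_mp n k l).lintegral_comp hF, lintegral_prod _ hF.aemeasurable]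

lemma tr_gram {k n : ℕ} (G : Matrix (Fin k) (Fin n) ℂ) :
    (Gᴴ * G).trace.re = ∑ j, ∑ i, ‖G i j‖ ^ 2 := by
  simp only [Matrix.trace, Matrix.diag_apply, Matrix.mul_apply, Matrix.conjTranspose_apply,
    Complex.re_sum]
  refine Finset.sum_congr rfl fun j _ => Finset.sum_congr rfl fun i _ => ?_
  rw [Complex.star_def, Complex.conj_mul']
  norm_cast

lemma tr_bound {k n : ℕ} (G : Matrix (Fin k) (Fin n) ℂ) (h : (Gᴴ * G).trace.re ≤ 1) (i j) :
    ‖G i j‖ ≤ 1 := by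
  rw [tr_gram] at h
  have h1 : ‖G i j‖ ^ 2 ≤ 1 := by
    refine le_trans ?_ h
    refine le_trans ?_ (Finset.single_le_sum (f := fun j => ∑ i, ‖G i j‖ ^ 2)
      (fun j _ => Finset.sum_nonneg fun i _ => by positivity) (Finset.mem_univ j))
    exact Finset.single_le_sum (f := fun i => ‖G i j‖ ^ 2) (fun i _ => by positivity) (Finset.mem_univ i)
  nlinarith [norm_nonneg (G i j)]

lemma sqr_meas (k n : ℕ) : Measurable fun p : Matrix (Fin k) (Fin n) ℂ => pᴴ * p :=
  (by fun_prop : Continuous fun p : Matrix (Fin k) (Fin n) ℂ => pᴴ * p).measurable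

lemma c0_eq (k n : ℕ) : ∫⁻ G, k0 (Gᴴ * G) ∂(leb k n) =
    leb k n {G | (Gᴴ * G).trace.re ≤ 1} := by
  have h := lintegral_indicator_one (μ := leb k n) ((sqr_meas k n) (k0_set n))
  exact h

lemma c0_pos (k n : ℕ) : ∫⁻ G, k0 (Gᴴ * G) ∂(leb k n) ≠ 0 := by
  rw [c0_eq]
  have ho : IsOpen {G : Matrix (Fin k) (Fin n) ℂ | (Gᴴ * G).trace.re < 1} :=
    isOpen_lt (by fun_prop) (by fun_prop)
  have h := ho.measure_pos (leb k n) ⟨0, by simp⟩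
  exact (lt_of_lt_of_le h (measure_mono fun G hG => le_of_lt (by exact hG : (Gᴴ * G).trace.re < 1))).ne'

lemma c0_fin (k n : ℕ) : ∫⁻ G, k0 (Gᴴ * G) ∂(leb k n) ≠ ⊤ := by
  rw [c0_eq]
  have hc : IsCompact (Set.univ.pi fun _ : Fin k => Set.univ.pi fun _ : Fin n =>
      Metric.closedBall (0:ℂ) 1) :=
    isCompact_univ_pi fun _ => isCompact_univ_pi fun _ => isCompact_closedBall _ _
  have h : leb k n (Set.univ.pi fun _ : Fin k => Set.univ.pi fun _ : Fin n =>
      Metric.closedBall (0:ℂ) 1) < ⊤ := hc.measure_lt_top (μ := (volume : Measure (Fin k → Fin n → ℂ)))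
  refine (lt_of_le_of_lt (measure_mono ?_) h).ne
  intro G hG i _ j _
  simpa using tr_bound G hG i j

/-- Lebesgue measure on the positive definite cone. -/
def etaP (n : ℕ) : Measure (Matrix (Fin n) (Fin n) ℂ) := (eta n).restrict {H | H.PosDef}

instance etaPSF (n : ℕ) : SFinite (etaP n) := by unfold etaP; infer_instance

lemma etaP_pd (n : ℕ) : ∀ᵐ H ∂(etaP n), H.PosDef := ae_restrict_mem (pd_meas n)

lemma etaP_lint (n : ℕ) (f : Matrix (Fin n) (Fin n) ℂ → ℝ≥0∞) :
    ∫⁻ H, f H ∂(etaP n) = ∫⁻ H, Set.indicator {H | H.PosDef} f H ∂(eta n) :=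
  (lintegral_indicator (pd_meas n) f).symm

lemma pd_congr {n : ℕ} {T H : Matrix (Fin n) (Fin n) ℂ} (hT : T.det ≠ 0) :
    (Tᴴ * H * T).PosDef ↔ H.PosDef := by
  have := Matrix.IsUnit.posDef_star_left_conjugate_iff (x := H)
    ((Matrix.isUnit_iff_isUnit_det T).2 hT.isUnit)
  exact this

lemma etaP_congr (n : ℕ) (T : Matrix (Fin n) (Fin n) ℂ) (hT : T.det ≠ 0)
    (f : Matrix (Fin n) (Fin n) ℂ → ℝ≥0∞) (hf : Measurable f) :
    dp (2 * (n + 0)) T * ∫⁻ H, f (Tᴴ * H * T) ∂(etaP n) = ∫⁻ H, f H ∂(etaP n) := by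
  rw [etaP_lint, etaP_lint, ← eta_congr n T hT _ (hf.indicator (pd_meas n))]
  rw [add_zero]
  change dp (2 * n) T * _ = dp (2 * n) T * _
  congr 1
  refine lintegral_congr fun H => ?_
  by_cases h : H.PosDef
  · have h' := (pd_congr hT).2 h
    rw [Set.indicator_of_mem (by exact h), Set.indicator_of_mem (by exact h')]
  · have h' := mt (pd_congr hT).1 h
    rw [Set.indicator_of_notMem (by exact h), Set.indicator_of_notMem (by exact h')]

section
open scoped MatrixOrder Matrix.Norms.L2Operator
lemma herm_shift {n : ℕ} {H : Matrix (Fin n) (Fin n) ℂ} (hH : H.IsHermitian) :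
    ∃ N : ℕ, (H + (N : ℂ) • (1 : Matrix (Fin n) (Fin n) ℂ)).PosDef := by
  obtain ⟨N, hN⟩ := exists_nat_gt ‖H‖
  refine ⟨N, ?_⟩
  have hs : IsSelfAdjoint H := hH
  have h1 := hs.neg_algebraMap_norm_le_self
  have h2 : (H - (-algebraMap ℝ (Matrix (Fin n) (Fin n) ℂ) ‖H‖)).PosSemidef := Matrix.le_iff.1 h1
  have h3 : (((N : ℝ) - ‖H‖ : ℝ) • (1 : Matrix (Fin n) (Fin n) ℂ)).PosDef :=
    Matrix.PosDef.one.smul (sub_pos.2 hN)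
  have h4 := Matrix.PosDef.posSemidef_add h2 h3
  convert h4 using 1
  rw [Algebra.algebraMap_eq_smul_one]
  ext i j
  simp
  ring
end

lemma etaP_ne (n : ℕ) : etaP n Set.univ ≠ 0 := by
  intro h0
  have h1 : eta n {H | H.PosDef} = 0 := by simpa [etaP] using h0
  have h2 : ∀ N : ℕ, eta n {H | (H + (N : ℂ) • (1 : Matrix (Fin n) (Fin n) ℂ)).PosDef} = 0 := by
    intro N
    have hK : ((N : ℂ) • (1 : Matrix (Fin n) (Fin n) ℂ)).IsHermitian := by
      rw [Matrix.IsHermitian, Matrix.conjTranspose_smul]; simp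
    have := eta_trans n _ hK _ (measurable_one.indicator (pd_meas n))
    rw [lintegral_indicator_one (pd_meas n), h1] at this
    have hm : Measurable fun H : Matrix (Fin n) (Fin n) ℂ => H + (N : ℂ) • (1 : Matrix (Fin n) (Fin n) ℂ) :=
      (by fun_prop : Continuous fun H : Matrix (Fin n) (Fin n) ℂ => H + (N : ℂ) • (1 : Matrix (Fin n) (Fin n) ℂ)).measurable
    exact (lintegral_indicator_one (hm (pd_meas n))).symm.trans this
  have h3 : eta n Set.univ = 0 := by
    have h4 := measure_iUnion_null h2
    have h5 : ∀ᵐ H ∂(eta n), H ∈ (⋃ N : ℕ, {H | (H + (N : ℂ) • (1 : Matrix (Fin n) (Fin n) ℂ)).PosDef}) := by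
      filter_upwards [eta_herm n] with H hH
      obtain ⟨N, hN⟩ := herm_shift hH
      exact Set.mem_iUnion.2 ⟨N, hN⟩
    rw [← measure_congr (eventuallyEq_univ.2 h5)]
    exact h4
  rw [eta, Measure.map_apply (phi_meas n) MeasurableSet.univ, Set.preimage_univ] at h3
  exact (isOpen_univ.measure_ne_zero (volume : Measure (Fin n → Fin n → ℝ)) Set.univ_nonempty) h3

lemma etaP_k0 (n : ℕ) : ∫⁻ H, k0 H ∂(etaP n) ≠ ⊤ := by
  have hb : ∀ H : Matrix (Fin n) (Fin n) ℂ, H.PosDef → H.trace.re ≤ 1 → ∀ i j, ‖H i j‖ ≤ n := by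
    intro H hH ht i j
    have h1 := rt_mul hH
    have h2 : ∀ i j, ‖rt H i j‖ ≤ 1 := tr_bound (rt H) (by rw [rt_herm, h1]; exact ht)
    rw [← h1, Matrix.mul_apply]
    refine (norm_sum_le _ _).trans ?_
    refine (Finset.sum_le_sum (g := fun _ => (1:ℝ)) fun k _ => ?_).trans (by simp)
    rw [norm_mul]
    exact mul_le_one₀ (h2 _ _) (norm_nonneg _) (h2 _ _)
  rw [etaP_lint, eta, lintegral_map ((k0_meas n).indicator (pd_meas n)) (phi_meas n)]
  have hc : IsCompact (Set.univ.pi fun _ : Fin n => Set.univ.pi fun _ : Fin n =>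
      Metric.closedBall (0:ℝ) n) :=
    isCompact_univ_pi fun _ => isCompact_univ_pi fun _ => isCompact_closedBall _ _
  have h := hc.measure_lt_top (μ := (volume : Measure (Fin n → Fin n → ℝ)))
  refine (lt_of_le_of_lt ?_ h).ne
  rw [← lintegral_indicator_one hc.isClosed.measurableSet]
  refine lintegral_mono fun R => ?_
  by_cases h1 : (phi n R).PosDef
  · rw [Set.indicator_of_mem (by exact h1)]
    by_cases h2 : (phi n R).trace.re ≤ 1
    · rw [Set.indicator_of_mem]
      · exact Set.indicator_le_self' (by simp) _
      · intro i _ j _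
        have h3 := hb _ h1 h2 i j
        have h4 : R i j = (((phi n R) i j).re + ((phi n R) i j).im) / 2 :=
          (congrFun (congrFun (psi_phi R) i) j).symm
        rw [mem_closedBall_zero_iff, Real.norm_eq_abs, h4, abs_le]
        have h5 := abs_le.1 (Complex.abs_re_le_norm (phi n R i j))
        have h6 := abs_le.1 (Complex.abs_im_le_norm (phi n R i j))
        constructor <;> linarith [h5.1, h5.2, h6.1, h6.2]
    · rw [k0, Set.indicator_of_notMem (by exact h2)]; exact zero_le
  · rw [Set.indicator_of_notMem (by exact h1)]; exact zero_le

lemma dp_zero {n : ℕ} (T : Matrix (Fin n) (Fin n) ℂ) : dp 0 T = 1 := by simp [dp]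

lemma dp_gram {n : ℕ} (d : ℕ) (T : Matrix (Fin n) (Fin n) ℂ) : dp d (Tᴴ * T) = dp (2 * d) T := by
  rw [dp_mul, dp_star, two_mul, dp_add]

lemma etaP_polar (n : ℕ) : ∃ κ : ℝ≥0∞, κ ≠ 0 ∧ κ ≠ ⊤ ∧
    ∀ f : Matrix (Fin n) (Fin n) ℂ → ℝ≥0∞, Measurable f →
      (∫⁻ T, k0 (Tᴴ * T) ∂(leb n n)) * ∫⁻ H, f H ∂(etaP n) = κ * ∫⁻ T, f (Tᴴ * T) ∂(leb n n) := by
  obtain ⟨κ, hκ⟩ := gen n 0 (etaP n) (etaP_pd n) (etaP_congr n)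
  simp only [mul_zero, dp_zero, mul_one] at hκ
  refine ⟨κ, ?_, ?_, hκ⟩
  · rintro rfl
    have h := hκ (fun _ => 1) measurable_const
    rw [zero_mul, mul_eq_zero] at h
    rcases h with h | h
    · exact c0_pos n n h
    · rw [lintegral_one] at h
      exact etaP_ne n h
  · rintro rfl
    have h := hκ k0 (k0_meas n)
    rw [ENNReal.top_mul (c0_pos n n)] at h
    exact ENNReal.mul_ne_top (c0_fin n n) (etaP_k0 n) h

lemma gram_law (n d : ℕ) : ∃ K : ℝ≥0∞, ∀ f : Matrix (Fin n) (Fin n) ℂ → ℝ≥0∞, Measurable f →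
    ∫⁻ G, f (Gᴴ * G) ∂(leb (n + d) n) = K * ∫⁻ H, dp d H * f H ∂(etaP n) := by
  obtain ⟨κ, h0, ht, hκ⟩ := etaP_polar n
  have hsq := sqr_meas (n + d) n
  have hmap : ∀ f : Matrix (Fin n) (Fin n) ℂ → ℝ≥0∞, Measurable f →
      ∫⁻ H, f H ∂(Measure.map (fun p : Matrix (Fin (n + d)) (Fin n) ℂ => pᴴ * p) (leb (n + d) n)) =
      ∫⁻ G, f (Gᴴ * G) ∂(leb (n + d) n) := fun f hf => lintegral_map hf hsq
  obtain ⟨κ', hκ'⟩ := gen n d (Measure.map (fun p : Matrix (Fin (n + d)) (Fin n) ℂ => pᴴ * p)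
    (leb (n + d) n)) ((ae_map_iff hsq.aemeasurable (pd_meas n)).2 (gram_pd_ae n d)) (by
      intro T hT f hf
      rw [hmap f hf, hmap _ (mc hf (conj_meas_r n T)),
        ← lint_right (n + d) n T hT _ (mc hf hsq)]
      change dp _ T * _ = dp _ T * _
      congr 1
      refine lintegral_congr fun G => ?_
      rw [Matrix.conjTranspose_mul]
      simp only [Matrix.mul_assoc])
  refine ⟨κ' * κ⁻¹, fun f hf => ?_⟩
  have h1 := hκ' f hf
  rw [hmap f hf] at h1
  have h2 := hκ (fun H => dp d H * f H) ((dp_meas n d).mul hf)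
  simp only [dp_gram] at h2
  have h3 : ∀ T : Matrix (Fin n) (Fin n) ℂ, f (Tᴴ * T) * dp (2 * d) T = dp (2 * d) T * f (Tᴴ * T) :=
    fun T => mul_comm _ _
  simp only [h3] at h1
  rw [← ENNReal.mul_right_inj (c0_pos n n) (c0_fin n n), h1]
  calc _ = κ' * (κ⁻¹ * κ * ∫⁻ T, dp (2 * d) T * f (Tᴴ * T) ∂(leb n n)) := by
        rw [ENNReal.inv_mul_cancel h0 ht, one_mul]
    _ = κ' * κ⁻¹ * (κ * ∫⁻ T, dp (2 * d) T * f (Tᴴ * T) ∂(leb n n)) := by ring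
    _ = _ := by rw [← h2]; ring

/-- Density on the positive cone. -/
def W {n : ℕ} (d : ℕ) (H : Matrix (Fin n) (Fin n) ℂ) : ℝ≥0∞ :=
  Set.indicator {H | H.PosDef} (dp d) H

lemma W_meas (n d : ℕ) : Measurable (W d : Matrix (Fin n) (Fin n) ℂ → ℝ≥0∞) :=
  (dp_meas n d).indicator (pd_meas n)

lemma W_congr {n : ℕ} (d : ℕ) {T H : Matrix (Fin n) (Fin n) ℂ} (hT : T.det ≠ 0) :
    W d (Tᴴ * H * T) = dp (2 * d) T * W d H := by
  unfold W
  by_cases h : H.PosDef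
  · have h' := (pd_congr hT).2 h
    rw [Set.indicator_of_mem (by exact h'), Set.indicator_of_mem (by exact h), dp_mul, dp_mul,
      dp_star, two_mul, dp_add]
    ring
  · have h' := mt (pd_congr hT).1 h
    rw [Set.indicator_of_notMem (by exact h'), Set.indicator_of_notMem (by exact h), mul_zero]

lemma W_pd {n : ℕ} (d : ℕ) {S G : Matrix (Fin n) (Fin n) ℂ} (h : ¬ S.PosDef) :
    W d (S - Gᴴ * G) = 0 := by
  unfold W
  rw [Set.indicator_of_notMem]
  intro h1
  have h1' : (S - Gᴴ * G).PosDef := h1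
  have := h1'.add_posSemidef (Matrix.posSemidef_conjTranspose_mul_self G)
  rw [sub_add_cancel] at this
  exact h this

/-- The integrand. -/
def Psi {n : ℕ} (f : Matrix (Fin n) (Fin n) ℂ → ℝ≥0∞)
    (p : Matrix (Fin n) (Fin n) ℂ × Matrix (Fin n) (Fin n) ℂ) : ℝ≥0∞ :=
  k0 p.2 * f (p.1 * (rt p.2)⁻¹)

lemma mul_meas' (n : ℕ) : Measurable
    fun p : Matrix (Fin n) (Fin n) ℂ × Matrix (Fin n) (Fin n) ℂ => p.1 * p.2 :=
  (by fun_prop : Continuous fun p : Matrix (Fin n) (Fin n) ℂ × Matrix (Fin n) (Fin n) ℂ =>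
    p.1 * p.2).measurable

lemma add_meas' (n : ℕ) : Measurable
    fun p : Matrix (Fin n) (Fin n) ℂ × Matrix (Fin n) (Fin n) ℂ => p.1ᴴ * p.1 + p.2 :=
  (by fun_prop : Continuous fun p : Matrix (Fin n) (Fin n) ℂ × Matrix (Fin n) (Fin n) ℂ =>
    p.1ᴴ * p.1 + p.2).measurable

lemma sub_meas' (n : ℕ) : Measurable
    fun p : Matrix (Fin n) (Fin n) ℂ × Matrix (Fin n) (Fin n) ℂ => p.2 - p.1ᴴ * p.1 :=
  (by fun_prop : Continuous fun p : Matrix (Fin n) (Fin n) ℂ × Matrix (Fin n) (Fin n) ℂ =>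
    p.2 - p.1ᴴ * p.1).measurable

lemma rti_meas (n : ℕ) : Measurable (fun S : Matrix (Fin n) (Fin n) ℂ => (rt S)⁻¹) := by
  have h := mc (inv_meas n) (rt_meas n)
  exact h

lemma Psi_meas {n : ℕ} {f : Matrix (Fin n) (Fin n) ℂ → ℝ≥0∞} (hf : Measurable f) :
    Measurable (Psi f) := by
  have h1 := mc (f := k0) (k0_meas n) (measurable_snd (α := Matrix (Fin n) (Fin n) ℂ))
  have h2 := mc (rti_meas n) (measurable_snd (α := Matrix (Fin n) (Fin n) ℂ))
  have h3 := mc hf (mc (mul_meas' n) (measurable_fst.prodMk h2))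
  exact h1.mul h3

lemma Psi_add_meas {n : ℕ} {f : Matrix (Fin n) (Fin n) ℂ → ℝ≥0∞} (hf : Measurable f)
    (G : Matrix (Fin n) (Fin n) ℂ) :
    Measurable fun H : Matrix (Fin n) (Fin n) ℂ => Psi f (G, Gᴴ * G + H) := by
  have h0 : Measurable fun H : Matrix (Fin n) (Fin n) ℂ => Gᴴ * G + H :=
    (by fun_prop : Continuous fun H : Matrix (Fin n) (Fin n) ℂ => Gᴴ * G + H).measurable
  have h1 := mc (f := Psi f) (Psi_meas hf) (Measurable.prodMk (measurable_const (a := G)) h0)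
  exact h1

lemma Psi_sub_meas {n : ℕ} (d : ℕ) {f : Matrix (Fin n) (Fin n) ℂ → ℝ≥0∞} (hf : Measurable f)  :
    Measurable fun p : Matrix (Fin n) (Fin n) ℂ × Matrix (Fin n) (Fin n) ℂ =>
      W d (p.2 - p.1ᴴ * p.1) * Psi f p :=
  (mc (f := W d) (W_meas n d) (sub_meas' n)).mul (Psi_meas hf)

lemma Psi_sub_meas_l {n : ℕ} (d : ℕ) {f : Matrix (Fin n) (Fin n) ℂ → ℝ≥0∞} (hf : Measurable f)
    (G : Matrix (Fin n) (Fin n) ℂ) :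
    Measurable fun S : Matrix (Fin n) (Fin n) ℂ => W d (S - Gᴴ * G) * Psi f (G, S) := by
  have h := mc (Psi_sub_meas d hf) (Measurable.prodMk (measurable_const (a := G)) measurable_id)
  exact h

lemma Psi_sub_meas_r {n : ℕ} (d : ℕ) {f : Matrix (Fin n) (Fin n) ℂ → ℝ≥0∞} (hf : Measurable f)
    (S : Matrix (Fin n) (Fin n) ℂ) :
    Measurable fun G : Matrix (Fin n) (Fin n) ℂ => W d (S - Gᴴ * G) * Psi f (G, S) := by
  have h := mc (Psi_sub_meas d hf) (Measurable.prodMk measurable_id (measurable_const (a := S)))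
  exact h

lemma Wf_meas {n : ℕ} (d : ℕ) {f : Matrix (Fin n) (Fin n) ℂ → ℝ≥0∞} (hf : Measurable f) :
    Measurable fun A : Matrix (Fin n) (Fin n) ℂ => W d (1 - Aᴴ * A) * f A := by
  have h0 : Measurable fun A : Matrix (Fin n) (Fin n) ℂ => 1 - Aᴴ * A :=
    (by fun_prop : Continuous fun A : Matrix (Fin n) (Fin n) ℂ => 1 - Aᴴ * A).measurable
  exact (mc (f := W d) (W_meas n d) h0).mul hf

lemma inner_A {n : ℕ} (d : ℕ) {f : Matrix (Fin n) (Fin n) ℂ → ℝ≥0∞} (hf : Measurable f)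
    {S : Matrix (Fin n) (Fin n) ℂ} (hS : S.PosDef) :
    ∫⁻ G, W d (S - Gᴴ * G) * Psi f (G, S) ∂(leb n n) =
      k0 S * dp (n + d) S * ∫⁻ A, W d (1 - Aᴴ * A) * f A ∂(leb n n) := by
  have hQ := rt_det hS
  rw [← lint_right n n (rt S) hQ _ (Psi_sub_meas_r d hf S)]
  rw [← lintegral_const_mul _ (Wf_meas d hf)]
  have hm : Measurable fun G : Matrix (Fin n) (Fin n) ℂ =>
      W d (S - (G * rt S)ᴴ * (G * rt S)) * Psi f (G * rt S, S) := by
    have h0 : Measurable fun H : Matrix (Fin n) (Fin n) ℂ => H * rt S :=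
      (by fun_prop : Continuous fun H : Matrix (Fin n) (Fin n) ℂ => H * rt S).measurable
    have := mc (Psi_sub_meas_r d hf S) h0
    exact this
  rw [← lintegral_const_mul _ hm]
  refine lintegral_congr fun A => ?_
  have e1 : S - (A * rt S)ᴴ * (A * rt S) = (rt S)ᴴ * (1 - Aᴴ * A) * rt S := by
    rw [Matrix.mul_sub, Matrix.sub_mul, Matrix.mul_one, rt_herm, rt_mul hS, Matrix.conjTranspose_mul,
      rt_herm]
    simp only [Matrix.mul_assoc]
  have e2 : Psi f (A * rt S, S) = k0 S * f A := by
    simp only [Psi]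
    rw [Matrix.mul_assoc, Matrix.mul_nonsing_inv _ hQ.isUnit, Matrix.mul_one]
  have e3 : dp (2 * n) (rt S) * dp (2 * d) (rt S) = dp (n + d) S := by
    rw [← dp_add]
    nth_rewrite 2 [← rt_mul hS]
    rw [dp_mul, ← dp_add]
    congr 1
    ring
  rw [e1, W_congr d hQ, e2, ← e3]
  change dp (2 * n) _ * _ = _
  ring

lemma main_int (n d : ℕ) : ∃ K : ℝ≥0∞, ∀ f : Matrix (Fin n) (Fin n) ℂ → ℝ≥0∞, Measurable f →
    ∫⁻ G, k0 (Gᴴ * G) * f (top (n := n) (k := n + d) G * (rt (Gᴴ * G))⁻¹) ∂(leb (n + (n + d)) n) =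
      K * ∫⁻ A, W d (1 - Aᴴ * A) * f A ∂(leb n n) := by
  obtain ⟨K, hK⟩ := gram_law n d
  refine ⟨K * ∫⁻ S, k0 S * dp (n + d) S ∂(etaP n), fun f hf => ?_⟩
  have hm1 : Measurable fun p : Matrix (Fin n) (Fin n) ℂ × Matrix (Fin (n + d)) (Fin n) ℂ =>
      Psi f (p.1, p.1ᴴ * p.1 + p.2ᴴ * p.2) := by
    have h0 : Measurable fun p : Matrix (Fin n) (Fin n) ℂ × Matrix (Fin (n + d)) (Fin n) ℂ =>
      p.1ᴴ * p.1 + p.2ᴴ * p.2 :=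
      (by fun_prop : Continuous fun p : Matrix (Fin n) (Fin n) ℂ × Matrix (Fin (n + d)) (Fin n) ℂ =>
        p.1ᴴ * p.1 + p.2ᴴ * p.2).measurable
    have h1 := mc (f := Psi f) (Psi_meas hf) (Measurable.prodMk measurable_fst h0)
    exact h1
  have hm3 : Measurable fun S : Matrix (Fin n) (Fin n) ℂ => k0 S * dp (n + d) S :=
    (k0_meas n).mul (dp_meas n _)
  have hm4 : Measurable fun G : Matrix (Fin n) (Fin n) ℂ =>
      ∫⁻ S, W d (S - Gᴴ * G) * Psi f (G, S) ∂(eta n) := by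
    have := (Psi_sub_meas d hf).lintegral_prod_right' (ν := eta n)
    exact this
  calc _ = ∫⁻ G, Psi f (top (n := n) (k := n + d) G, (top (n := n) (k := n + d) G)ᴴ *
          top (n := n) (k := n + d) G + (bot G)ᴴ * bot G) ∂(leb (n + (n + d)) n) := by
        refine lintegral_congr fun G => ?_
        rw [← gram_split]
        rfl
    _ = ∫⁻ G1, ∫⁻ G2, Psi f (G1, G1ᴴ * G1 + G2ᴴ * G2) ∂(leb (n + d) n) ∂(leb n n) :=
        lint_split n (n + d) n _ hm1
    _ = ∫⁻ G1, K * ∫⁻ S, W d (S - G1ᴴ * G1) * Psi f (G1, S) ∂(eta n) ∂(leb n n) := by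
        refine lintegral_congr fun G => ?_
        rw [hK (fun H => Psi f (G, Gᴴ * G + H)) (Psi_add_meas hf G), etaP_lint]
        congr 1
        rw [← eta_trans n (Gᴴ * G) (Matrix.isHermitian_conjTranspose_mul_self G) _
          (Psi_sub_meas_l d hf G)]
        refine lintegral_congr fun H => ?_
        rw [add_sub_cancel_right, add_comm H, W]
        by_cases h : H.PosDef
        · rw [Set.indicator_of_mem (by exact h), Set.indicator_of_mem (by exact h)]
        · rw [Set.indicator_of_notMem (by exact h), Set.indicator_of_notMem (by exact h), zero_mul]
    _ = K * ∫⁻ G1, ∫⁻ S, W d (S - G1ᴴ * G1) * Psi f (G1, S) ∂(eta n) ∂(leb n n) :=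
        lintegral_const_mul _ hm4
    _ = K * ∫⁻ S, ∫⁻ G1, W d (S - G1ᴴ * G1) * Psi f (G1, S) ∂(leb n n) ∂(eta n) := by
        congr 1
        exact lintegral_lintegral_swap (Psi_sub_meas d hf).aemeasurable
    _ = K * ∫⁻ S, k0 S * dp (n + d) S * ∫⁻ A, W d (1 - Aᴴ * A) * f A ∂(leb n n) ∂(etaP n) := by
        congr 1
        rw [etaP_lint]
        refine lintegral_congr fun S => ?_
        by_cases h : S.PosDef
        · rw [Set.indicator_of_mem (by exact h), inner_A d hf h]
        · rw [Set.indicator_of_notMem (by exact h)]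
          simp only [W_pd d h, zero_mul, lintegral_zero]
    _ = _ := by rw [lintegral_mul_const _ hm3, mul_assoc]

section haar
variable {m : ℕ} (ℙ : Measure (Matrix.unitaryGroup (Fin m) ℂ)) 

lemma ug_left (hinv : ∀ V : Matrix.unitaryGroup (Fin m) ℂ, Measure.map (fun U => V * U) ℙ = ℙ)
    (f : Matrix.unitaryGroup (Fin m) ℂ → ℝ≥0∞) (hf : Measurable f) (V : Matrix.unitaryGroup (Fin m) ℂ) :
    ∫⁻ U, f (V * U) ∂ℙ = ∫⁻ U, f U ∂ℙ := by
  conv_rhs => rw [← hinv V]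
  rw [lintegral_map hf (measurable_const_mul V)]

lemma ug_inv [IsProbabilityMeasure ℙ] (hinv : ∀ V : Matrix.unitaryGroup (Fin m) ℂ, Measure.map (fun U => V * U) ℙ = ℙ)
    (f : Matrix.unitaryGroup (Fin m) ℂ → ℝ≥0∞) (hf : Measurable f) :
    ∫⁻ U, f U⁻¹ ∂ℙ = ∫⁻ U, f U ∂ℙ := by
  have hm : Measurable fun p : Matrix.unitaryGroup (Fin m) ℂ × Matrix.unitaryGroup (Fin m) ℂ =>
      f (p.1⁻¹ * p.2) :=
    mc hf (measurable_fst.inv.mul measurable_snd)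
  calc _ = ∫⁻ W, ∫⁻ U, f U⁻¹ ∂ℙ ∂ℙ := by simp
    _ = ∫⁻ W, ∫⁻ U, f (U⁻¹ * W) ∂ℙ ∂ℙ := by
      refine lintegral_congr fun W => ?_
      rw [← ug_left ℙ hinv (fun U => f U⁻¹) (mc hf measurable_inv) W⁻¹]
      simp only [_root_.mul_inv_rev, inv_inv]
    _ = ∫⁻ U, ∫⁻ W, f (U⁻¹ * W) ∂ℙ ∂ℙ := (lintegral_lintegral_swap hm.aemeasurable).symm
    _ = ∫⁻ U, ∫⁻ W, f W ∂ℙ ∂ℙ := lintegral_congr fun U => ug_left ℙ hinv f hf _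
    _ = _ := by simp

lemma ug_right [IsProbabilityMeasure ℙ] (hinv : ∀ V : Matrix.unitaryGroup (Fin m) ℂ, Measure.map (fun U => V * U) ℙ = ℙ)
    (f : Matrix.unitaryGroup (Fin m) ℂ → ℝ≥0∞) (hf : Measurable f) (V : Matrix.unitaryGroup (Fin m) ℂ) :
    ∫⁻ U, f (U * V) ∂ℙ = ∫⁻ U, f U ∂ℙ := by
  rw [← ug_inv ℙ hinv (fun U => f (U * V)) (mc hf (measurable_mul_const V)), ← ug_inv ℙ hinv f hf,
    ← ug_left ℙ hinv (fun U => f U⁻¹) (mc hf measurable_inv) V⁻¹]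
  simp only [_root_.mul_inv_rev, inv_inv]

end haar

lemma extend_unitary {n k : ℕ} (X : Matrix (Fin (n + k)) (Fin n) ℂ) (hX : Xᴴ * X = 1) :
    ∃ V : Matrix.unitaryGroup (Fin (n + k)) ℂ, V.val.submatrix id (Fin.castAdd k) = X := by
  let v : Fin (n + k) → EuclideanSpace ℂ (Fin (n + k)) := fun j =>
    Fin.addCases (fun j => WithLp.toLp 2 fun i => X i j) (fun _ => 0) j
  have hv : Orthonormal ℂ ((Set.range (Fin.castAdd k : Fin n → _)).domRestrict v) := by
    rw [orthonormal_iff_ite]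
    rintro ⟨_, i, rfl⟩ ⟨_, j, rfl⟩
    have h := congrFun (congrFun hX i) j
    rw [Matrix.mul_apply, Matrix.one_apply] at h
    simp [v, PiLp.inner_apply, Subtype.ext_iff]
    rw [← h]
    refine Finset.sum_congr rfl fun l _ => ?_
    simp [mul_comm]
  obtain ⟨b, hb⟩ := hv.exists_orthonormalBasis_extension_of_card_eq (by simp)
  refine ⟨⟨Matrix.of fun i j => b j i, ?_⟩, ?_⟩
  · rw [Matrix.mem_unitaryGroup_iff']
    ext i j
    have h := orthonormal_iff_ite.1 b.orthonormal i j
    rw [Matrix.one_apply, ← h, Matrix.mul_apply, PiLp.inner_apply]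
    refine Finset.sum_congr rfl fun l _ => ?_
    simp [Matrix.star_apply, mul_comm]
  · ext i j
    have := hb (Fin.castAdd k j) ⟨j, rfl⟩
    simp [this, v]

lemma trunc_eq {n k : ℕ} (U : Matrix (Fin (n + k)) (Fin (n + k)) ℂ) :
    truncation (n + k) n U = top (U.submatrix id (Fin.castAdd k)) := by
  ext i j
  have h : (i : ℕ) < n + k ∧ (j : ℕ) < n + k := ⟨by omega, by omega⟩
  simp only [truncation, Matrix.of_apply, dif_pos h, top, Matrix.submatrix_apply]
  rfl

lemma top_mul {n k l p : ℕ} (G : Matrix (Fin (n + k)) (Fin l) ℂ) (T : Matrix (Fin l) (Fin p) ℂ) :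
    top (G * T) = top G * T := by
  ext i j; simp [top, Matrix.mul_apply]

/-- The integrand. -/
def Th {n k : ℕ} (f : Matrix (Fin n) (Fin n) ℂ → ℝ≥0∞) (G : Matrix (Fin (n + k)) (Fin n) ℂ) : ℝ≥0∞ :=
  k0 (Gᴴ * G) * f (top G * (rt (Gᴴ * G))⁻¹)

lemma top_meas (n k l : ℕ) : Measurable (top : Matrix (Fin (n + k)) (Fin l) ℂ → _) :=
  (by unfold top; fun_prop : Continuous (top : Matrix (Fin (n + k)) (Fin l) ℂ → _)).measurable

lemma Th_meas (n k : ℕ) {f : Matrix (Fin n) (Fin n) ℂ → ℝ≥0∞} (hf : Measurable f) :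
    Measurable (Th (k := k) f) := by
  have h1 := mc (f := k0) (k0_meas n) (sqr_meas (n + k) n)
  have h2 := mc (rti_meas n) (sqr_meas (n + k) n)
  have h3 := mc hf (mc (mul_meas' n) ((top_meas n k n).prodMk h2))
  exact h1.mul h3

lemma ug_gram {n m : ℕ} (U : Matrix.unitaryGroup (Fin m) ℂ) (G : Matrix (Fin m) (Fin n) ℂ) :
    (U.val * G)ᴴ * (U.val * G) = Gᴴ * G := by
  have h : (U.val)ᴴ * U.val = 1 := Matrix.mem_unitaryGroup_iff'.1 U.2
  rw [Matrix.conjTranspose_mul, Matrix.mul_assoc, ← Matrix.mul_assoc _ U.val, h, Matrix.one_mul]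

lemma corner_meas (n k : ℕ) : Measurable fun U : Matrix.unitaryGroup (Fin (n + k)) ℂ =>
    truncation (n + k) n U.val := by
  simp only [trunc_eq]
  exact (by unfold top; fun_prop : Continuous fun U : Matrix.unitaryGroup (Fin (n + k)) ℂ =>
    top (U.val.submatrix id (Fin.castAdd k))).measurable

lemma U_side (n k : ℕ) (ℙ : Measure (Matrix.unitaryGroup (Fin (n + k)) ℂ)) [IsProbabilityMeasure ℙ]
    (hinv : ∀ V : Matrix.unitaryGroup (Fin (n + k)) ℂ, Measure.map (fun U => V * U) ℙ = ℙ)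
    (f : Matrix (Fin n) (Fin n) ℂ → ℝ≥0∞) (hf : Measurable f) :
    (∫⁻ G, k0 (Gᴴ * G) ∂(leb (n + k) n)) * ∫⁻ U, f (truncation (n + k) n U.val) ∂ℙ =
      ∫⁻ G, Th f G ∂(leb (n + k) n) := by
  have hact : Measurable fun p : Matrix (Fin (n + k)) (Fin n) ℂ × Matrix.unitaryGroup (Fin (n + k)) ℂ =>
      p.2.val * p.1 :=
    (by fun_prop : Continuous fun p : Matrix (Fin (n + k)) (Fin n) ℂ ×
      Matrix.unitaryGroup (Fin (n + k)) ℂ => p.2.val * p.1).measurable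
  have hk : Measurable fun G : Matrix (Fin (n + k)) (Fin n) ℂ => k0 (Gᴴ * G) :=
    mc (f := k0) (k0_meas n) (sqr_meas (n + k) n)
  calc _ = ∫⁻ G, k0 (Gᴴ * G) * ∫⁻ U, f (truncation (n + k) n U.val) ∂ℙ ∂(leb (n + k) n) :=
        (lintegral_mul_const _ hk).symm
    _ = ∫⁻ G, ∫⁻ U, Th f (U.val * G) ∂ℙ ∂(leb (n + k) n) := by
        refine lintegral_congr_ae ?_
        filter_upwards [gram_pd_ae n k] with G hG
        have hQ := rt_det hG
        obtain ⟨V, hV⟩ := extend_unitary (G * (rt (Gᴴ * G))⁻¹) (by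
          rw [Matrix.conjTranspose_mul, Matrix.conjTranspose_nonsing_inv, rt_herm]
          calc _ = (rt (Gᴴ * G))⁻¹ * (Gᴴ * G) * (rt (Gᴴ * G))⁻¹ := by simp only [Matrix.mul_assoc]
            _ = (rt (Gᴴ * G))⁻¹ * (rt (Gᴴ * G) * rt (Gᴴ * G)) * (rt (Gᴴ * G))⁻¹ := by rw [rt_mul hG]
            _ = _ := by
              rw [← Matrix.mul_assoc, Matrix.nonsing_inv_mul _ hQ.isUnit, Matrix.one_mul,
                Matrix.mul_nonsing_inv _ hQ.isUnit])
        rw [← ug_right ℙ hinv (fun U => f (truncation (n + k) n U.val)) (mc hf (corner_meas n k)) V,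
          ← lintegral_const_mul]
        · refine lintegral_congr fun U => ?_
          rw [Th, ug_gram]
          congr 2
          rw [trunc_eq, ← top_mul, Matrix.mul_assoc, ← hV]
          congr 1
        · exact mc (f := fun U : Matrix.unitaryGroup (Fin (n + k)) ℂ => f (truncation (n + k) n U.val))
            (mc hf (corner_meas n k)) (measurable_mul_const V)
    _ = ∫⁻ U, ∫⁻ G, Th f (U.val * G) ∂(leb (n + k) n) ∂ℙ :=
        lintegral_lintegral_swap (mc (f := Th f) (Th_meas n k hf) hact).aemeasurable
    _ = ∫⁻ U, ∫⁻ G, Th f G ∂(leb (n + k) n) ∂ℙ := by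
        refine lintegral_congr fun U => ?_
        have h1 : ‖U.val.det‖ = 1 := by
          have h2 : U.val.det ∈ unitary ℂ := Matrix.det_of_mem_unitary U.2
          exact CStarRing.norm_of_mem_unitary h2
        have h0 : U.val.det ≠ 0 := by
          intro h; rw [h] at h1; simp at h1
        rw [← lint_left (n + k) n U.val h0 _ (Th_meas n k hf), h1]
        simp
    _ = _ := by simp

lemma bdry_null (n : ℕ) : ∀ᵐ A ∂(leb n n), (1 - Aᴴ * A).det ≠ 0 := by
  let N : Set (Matrix (Fin n) (Fin n) ℂ) := {A | (1 - Aᴴ * A).det = 0}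
  have hN : MeasurableSet N := (isClosed_eq (by fun_prop) (by fun_prop)).measurableSet
  have hm : Measurable fun p : ℝ × Matrix (Fin n) (Fin n) ℂ => N.indicator (1 : Matrix (Fin n) (Fin n) ℂ → ℝ≥0∞)
      (p.2 * ((p.1 : ℂ) • (1 : Matrix (Fin n) (Fin n) ℂ))) := by
    refine mc (measurable_one.indicator hN) ?_
    exact (by fun_prop : Continuous fun p : ℝ × Matrix (Fin n) (Fin n) ℂ =>
      p.2 * ((p.1 : ℂ) • (1 : Matrix (Fin n) (Fin n) ℂ))).measurable
  have h2 : ∫⁻ t in Set.Icc (1:ℝ) 2, ∫⁻ A, N.indicator (1 : Matrix (Fin n) (Fin n) ℂ → ℝ≥0∞)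
      (A * ((t : ℂ) • (1 : Matrix (Fin n) (Fin n) ℂ))) ∂(leb n n) = 0 := by
    rw [lintegral_lintegral_swap hm.aemeasurable]
    refine (lintegral_congr fun A => ?_).trans lintegral_zero
    have hfin : {t : ℝ | t ∈ Set.Icc (1:ℝ) 2 ∧ A * ((t : ℂ) • (1 : Matrix (Fin n) (Fin n) ℂ)) ∈ N}.Finite := by
      refine Set.Finite.of_finite_image (f := fun t : ℝ => (((t ^ 2)⁻¹ : ℝ) : ℂ)) ?_ ?_
      · refine Set.Finite.subset (Polynomial.finite_setOfPred_isRoot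
          (Matrix.charpoly_monic (Aᴴ * A)).ne_zero) ?_
        rintro _ ⟨t, ⟨ht, hA⟩, rfl⟩
        have hA' : (1 - (A * ((t : ℂ) • (1 : Matrix (Fin n) (Fin n) ℂ)))ᴴ *
          (A * ((t : ℂ) • (1 : Matrix (Fin n) (Fin n) ℂ)))).det = 0 := hA
        have ht0 : (t : ℂ) ≠ 0 := by
          have : (0:ℝ) < t := by linarith [ht.1]
          exact_mod_cast this.ne'
        have e : 1 - (A * ((t : ℂ) • (1 : Matrix (Fin n) (Fin n) ℂ)))ᴴ *
          (A * ((t : ℂ) • (1 : Matrix (Fin n) (Fin n) ℂ))) =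
          ((t : ℂ) ^ 2) • (Matrix.scalar (Fin n) (((t ^ 2)⁻¹ : ℝ) : ℂ) - Aᴴ * A) := by
          rw [Matrix.mul_smul, Matrix.mul_one, Matrix.conjTranspose_smul, Matrix.smul_mul,
            Matrix.mul_smul, smul_smul, smul_sub, Complex.star_def, Complex.conj_ofReal, ← sq]
          congr 1
          ext i j
          by_cases hij : i = j
          · subst hij; simp [ht0, Matrix.one_apply]
          · simp [hij, Matrix.one_apply]
        rw [e, Matrix.det_smul, mul_eq_zero] at hA'
        rcases hA' with h | h
        · exact absurd h (pow_ne_zero _ (pow_ne_zero _ ht0))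
        · change Polynomial.eval _ _ = 0
          rw [Matrix.eval_charpoly]
          exact h
      · intro t ht s hs hts
        have h1 : (t ^ 2)⁻¹ = (s ^ 2)⁻¹ := Complex.ofReal_injective hts
        have h2 := inv_injective h1
        have h3 : (1:ℝ) ≤ t := ht.1.1
        have h4 : (1:ℝ) ≤ s := hs.1.1
        nlinarith
    have : ∀ᵐ t : ℝ ∂(volume.restrict (Set.Icc (1:ℝ) 2)), N.indicator (1 : Matrix (Fin n) (Fin n) ℂ → ℝ≥0∞)
      (A * ((t : ℂ) • (1 : Matrix (Fin n) (Fin n) ℂ))) = 0 := by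
      rw [ae_restrict_iff' measurableSet_Icc, ae_iff]
      refine measure_mono_null ?_ (hfin.measure_zero volume)
      intro t ht
      have ht' : ¬ (t ∈ Set.Icc (1:ℝ) 2 → N.indicator (1 : Matrix (Fin n) (Fin n) ℂ → ℝ≥0∞)
        (A * ((t : ℂ) • (1 : Matrix (Fin n) (Fin n) ℂ))) = 0) := ht
      push Not at ht'
      exact ⟨ht'.1, Set.mem_of_indicator_ne_zero ht'.2⟩
    rw [lintegral_congr_ae this]; simp
  have h3 := (lintegral_eq_zero_iff hm.lintegral_prod_right').1 h2
  rw [Filter.EventuallyEq, ae_restrict_iff' measurableSet_Icc, ae_iff] at h3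
  have h4 : ∃ t ∈ Set.Icc (1:ℝ) 2, ∫⁻ A, N.indicator (1 : Matrix (Fin n) (Fin n) ℂ → ℝ≥0∞)
      (A * ((t : ℂ) • (1 : Matrix (Fin n) (Fin n) ℂ))) ∂(leb n n) = 0 := by
    by_contra hc
    push Not at hc
    have : volume (Set.Icc (1:ℝ) 2) = 0 := by
      refine measure_mono_null ?_ h3
      intro t ht hh
      exact hc t ht (hh ht)
    rw [Real.volume_Icc] at this
    norm_num at this
  obtain ⟨t, ht, h5⟩ := h4
  have hd : ((t : ℂ) • (1 : Matrix (Fin n) (Fin n) ℂ)).det ≠ 0 := by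
    rw [Matrix.det_smul, Matrix.det_one, mul_one]
    have : (0:ℝ) < t := by linarith [ht.1]
    exact pow_ne_zero _ (by exact_mod_cast this.ne')
  have h6 := lint_right n n _ hd _ (measurable_one.indicator hN)
  rw [h5, mul_zero, lintegral_indicator_one hN] at h6
  rw [ae_iff]
  simp only [not_not]
  exact h6.symm

/-- **The distribution of the corner of a Haar unitary matrix** (Collins).  Here `ℙ` is
the Haar probability measure on the `m × m` unitary group (the unique left-invariant
Borel probability measure).  For `m ≥ 2n`, the law of the upper-left `n × n` corner `A`
of a Haar unitary is absolutely continuous with respect to the Lebesgue measure, with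
density `C(n,m) det(1 - A*A)^{m-2n}` on the set of contractions (described as the set
where `1 - AᴴA` is positive semidefinite) and zero elsewhere. -/
theorem corner_of_haar_unitary_density
    (m n : ℕ) (hn : 1 ≤ n) (hmn : 2 * n ≤ m)
    (ℙ : Measure (Matrix.unitaryGroup (Fin m) ℂ))
    (hprob : IsProbabilityMeasure ℙ)
    (hinv : ∀ V : Matrix.unitaryGroup (Fin m) ℂ,
      Measure.map (fun U => V * U) ℙ = ℙ) :
    ∃ C : ℝ, 0 < C ∧
      Measure.map (fun U => truncation m n U.val) ℙ =
        (lebesgueMatrix n).withDensity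
          (Set.indicator {A : Matrix (Fin n) (Fin n) ℂ | (1 - Aᴴ * A).PosSemidef}
            fun A => ENNReal.ofReal (C * ((1 - Aᴴ * A).det.re) ^ (m - 2 * n))) := by
  obtain ⟨d, rfl⟩ : ∃ d, m = n + (n + d) := ⟨m - 2 * n, by omega⟩
  have hd : n + (n + d) - 2 * n = d := by omega
  obtain ⟨K, hK⟩ := main_int n d
  set c : ℝ≥0∞ := ∫⁻ G, k0 (Gᴴ * G) ∂(leb (n + (n + d)) n) with hc
  have hc0 : c ≠ 0 := c0_pos _ _
  have hct : c ≠ ⊤ := c0_fin _ _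
  have hE : ∀ f : Matrix (Fin n) (Fin n) ℂ → ℝ≥0∞, Measurable f →
      c * ∫⁻ U, f (truncation (n + (n + d)) n U.val) ∂ℙ =
        K * ∫⁻ A, W d (1 - Aᴴ * A) * f A ∂(leb n n) := fun f hf =>
    (U_side n (n + d) ℙ hinv f hf).trans (hK f hf)
  have h1 := hE (fun _ => 1) measurable_const
  rw [lintegral_one, measure_univ, mul_one] at h1
  have hK0 : K ≠ 0 := by
    rintro rfl
    rw [zero_mul] at h1
    exact hc0 h1
  have hKt : K ≠ ⊤ := by
    rintro rfl
    rw [ENNReal.top_mul'] at h1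
    split_ifs at h1
    · exact hc0 h1
    · exact hct h1
  have hr0 : c⁻¹ * K ≠ 0 := mul_ne_zero (ENNReal.inv_ne_zero.2 hct) hK0
  have hrt : c⁻¹ * K ≠ ⊤ := ENNReal.mul_ne_top (ENNReal.inv_ne_top.2 hc0) hKt
  refine ⟨(c⁻¹ * K).toReal, ENNReal.toReal_pos hr0 hrt, ?_⟩
  rw [hd]
  have hW : Measurable fun A : Matrix (Fin n) (Fin n) ℂ => W d (1 - Aᴴ * A) := by
    have := Wf_meas (n := n) d (f := fun _ => 1) measurable_const
    simpa only [mul_one] using this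
  have hae : (Set.indicator {A : Matrix (Fin n) (Fin n) ℂ | (1 - Aᴴ * A).PosSemidef}
      fun A => ENNReal.ofReal ((c⁻¹ * K).toReal * ((1 - Aᴴ * A).det.re) ^ d)) =ᵐ[leb n n]
      fun A => (c⁻¹ * K) * W d (1 - Aᴴ * A) := by
    filter_upwards [bdry_null n] with A hA
    by_cases h : (1 - Aᴴ * A).PosSemidef
    · have h2 : (1 - Aᴴ * A).PosDef := h.posDef_iff_det_ne_zero.2 hA
      have h3 : ‖(1 - Aᴴ * A).det‖ = (1 - Aᴴ * A).det.re :=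
        (Complex.re_eq_norm.2 h.det_nonneg).symm
      rw [Set.indicator_of_mem (by exact h), W, Set.indicator_of_mem (by exact h2), dp, h3,
        ENNReal.ofReal_mul ENNReal.toReal_nonneg, ENNReal.ofReal_toReal hrt]
    · have h2 : ¬ (1 - Aᴴ * A).PosDef := fun hh => h hh.posSemidef
      rw [Set.indicator_of_notMem (by exact h), W, Set.indicator_of_notMem (by exact h2), mul_zero]
  rw [leb_eq, withDensity_congr_ae hae]
  refine Measure.ext fun s hs => ?_
  have hs1 : Measurable (s.indicator (1 : Matrix (Fin n) (Fin n) ℂ → ℝ≥0∞)) :=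
    measurable_one.indicator hs
  rw [← lintegral_indicator_one hs, lintegral_map hs1 (corner_meas n (n + d)),
    withDensity_apply _ hs, lintegral_const_mul _ hW]
  have h2 := hE _ hs1
  have h3 : ∫⁻ A, W d (1 - Aᴴ * A) * s.indicator (1 : Matrix (Fin n) (Fin n) ℂ → ℝ≥0∞) A ∂(leb n n)
      = ∫⁻ A in s, W d (1 - Aᴴ * A) ∂(leb n n) := by
    rw [← lintegral_indicator hs]
    refine lintegral_congr fun A => ?_
    by_cases h : A ∈ s
    · simp [h]
    · simp [h]
  rw [h3] at h2
  rw [mul_assoc, ← h2, ← mul_assoc, ENNReal.inv_mul_cancel hc0 hct, one_mul]
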